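/- arXiv:1307.5505 — 4 statements merged into one kernel-verified Lean document; each statement's English description precedes it below -/
import Mathlib

section
/- Let R be a commutative ring over which every flat module has finite cotorsion dimension bounded by n. Then any bounded acyclic complex of flat R-modules whose components are all cotorsion is contractible (homotopy equivalent to zero). -/
open CategoryTheory

universe u

section Defs

variable (R : Type u) [CommRing R]

/-- A linear map is a pure monomorphism if it is injective and stays injective
after tensoring with any module. -/
def IsPureMono {A B : Type u} [AddCommGroup A] [Module R A] [AddCommGroup B] [Module R B]
    (f : A →ₗ[R] B) : Prop :=
  Function.Injective f ∧
    ∀ (P : Type u) [AddCommGroup P] [Module R P],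
      Function.Injective (LinearMap.rTensor P f)

/-- A module is pure injective if it is injective with respect to pure monomorphisms. -/
def IsPureInjective (E : Type u) [AddCommGroup E] [Module R E] : Prop :=
  ∀ ⦃A B : Type u⦄ [AddCommGroup A] [Module R A] [AddCommGroup B] [Module R B]
    (f : A →ₗ[R] B), IsPureMono R f →
      ∀ g : A →ₗ[R] E, ∃ h : B →ₗ[R] E, h.comp f = g

/-- Vanishing of `Ext^n`. -/
def extVanish (n : ℕ) (M N : Type u) [AddCommGroup M] [Module R M]
    [AddCommGroup N] [Module R N] : Prop :=
  Subsingleton (((Ext R (ModuleCat.{u} R) n).obj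
    (Opposite.op (ModuleCat.of R M))).obj (ModuleCat.of R N))

/-- A module `C` is cotorsion if `Ext¹(F, C) = 0` for every flat module `F`. -/
def IsCotorsion (C : Type u) [AddCommGroup C] [Module R C] : Prop :=
  ∀ (F : Type u) [AddCommGroup F] [Module R F], Module.Flat R F →
    extVanish R 1 F C

/-- Short exact sequence of modules. -/
def IsShortExact {A B C : Type u} [AddCommGroup A] [Module R A] [AddCommGroup B] [Module R B]
    [AddCommGroup C] [Module R C] (f : A →ₗ[R] B) (g : B →ₗ[R] C) : Prop :=
  Function.Injective f ∧ Function.Surjective g ∧ LinearMap.ker g = LinearMap.range f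

/-- Pure short exact sequence. -/
def IsPureShortExact {A B C : Type u} [AddCommGroup A] [Module R A] [AddCommGroup B]
    [Module R B] [AddCommGroup C] [Module R C] (f : A →ₗ[R] B) (g : B →ₗ[R] C) : Prop :=
  IsShortExact R f g ∧
    ∀ (P : Type u) [AddCommGroup P] [Module R P],
      Function.Injective (LinearMap.rTensor P f)

/-- A cotorsion resolution `0 → M → C⁰ → ⋯ → Cⁿ → 0` of length `n`. -/
structure CotorsionResolution (M : Type u) [AddCommGroup M] [Module R M] (n : ℕ) where
  C : ℕ → Type u
  [acg : ∀ i, AddCommGroup (C i)]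
  [mod : ∀ i, Module R (C i)]
  f : M →ₗ[R] C 0
  d : ∀ i, C i →ₗ[R] C (i + 1)
  hf : Function.Injective f
  hd0 : LinearMap.ker (d 0) = LinearMap.range f
  hd : ∀ i, LinearMap.ker (d (i + 1)) = LinearMap.range (d i)
  hcot : ∀ i, IsCotorsion R (C i)
  htail : ∀ i, n < i → Subsingleton (C i)

/-- `M` has cotorsion dimension at most `n`. -/
def cotorsionDimLE (M : Type u) [AddCommGroup M] [Module R M] (n : ℕ) : Prop :=
  Nonempty (CotorsionResolution R M n)

/-- A pure injective resolution `0 → M → E⁰ → ⋯ → Eⁿ → 0` of length `n`,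
pure exact in each degree. -/
structure PureInjectiveResolution (M : Type u) [AddCommGroup M] [Module R M] (n : ℕ) where
  E : ℕ → Type u
  [acg : ∀ i, AddCommGroup (E i)]
  [mod : ∀ i, Module R (E i)]
  f : M →ₗ[R] E 0
  d : ∀ i, E i →ₗ[R] E (i + 1)
  hf : Function.Injective f
  hd0 : LinearMap.ker (d 0) = LinearMap.range f
  hd : ∀ i, LinearMap.ker (d (i + 1)) = LinearMap.range (d i)
  hpinj : ∀ i, IsPureInjective R (E i)
  htail : ∀ i, n < i → Subsingleton (E i)
  pure : ∀ (P : Type u) [AddCommGroup P] [Module R P],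
    Function.Injective (LinearMap.rTensor P f) ∧
    LinearMap.ker (LinearMap.rTensor P (d 0)) = LinearMap.range (LinearMap.rTensor P f) ∧
    ∀ i, LinearMap.ker (LinearMap.rTensor P (d (i + 1))) =
      LinearMap.range (LinearMap.rTensor P (d i))

/-- `M` has pure injective dimension at most `n`. -/
def pureInjDimLE (M : Type u) [AddCommGroup M] [Module R M] (n : ℕ) : Prop :=
  Nonempty (PureInjectiveResolution R M n)

end Defs

section Helpers

variable {R : Type u} [CommRing R]

lemma exists_factor_of_surjective {M N K : Type u} [AddCommGroup M] [Module R M]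
    [AddCommGroup N] [Module R N] [AddCommGroup K] [Module R K]
    (s : M →ₗ[R] N) (hs : Function.Surjective s) (t : M →ₗ[R] K)
    (h : ∀ x, s x = 0 → t x = 0) : ∃ k : N →ₗ[R] K, ∀ x, k (s x) = t x := by
  refine ⟨((LinearMap.ker s).liftQ t (fun x hx => h x hx)).comp
    (s.quotKerEquivOfSurjective hs).symm.toLinearMap, fun x => ?_⟩
  have : (s.quotKerEquivOfSurjective hs).symm (s x) = (LinearMap.ker s).mkQ x := by
    rw [LinearEquiv.symm_apply_eq]; rfl
  change (LinearMap.ker s).liftQ t (fun x hx => h x hx) ((s.quotKerEquivOfSurjective hs).symm (s x)) = t x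
  rw [this]
  exact Submodule.liftQ_apply _ _ _

lemma exists_factor_of_injective {M A B : Type u} [AddCommGroup M] [Module R M]
    [AddCommGroup A] [Module R A] [AddCommGroup B] [Module R B]
    (f : A →ₗ[R] B) (hf : Function.Injective f) (t : M →ₗ[R] B)
    (h : ∀ x, ∃ a, f a = t x) : ∃ k : M →ₗ[R] A, ∀ x, f (k x) = t x := by
  refine ⟨(LinearEquiv.ofInjective f hf).symm.toLinearMap.comp
    (t.codRestrict (LinearMap.range f) (fun x => h x)), fun x => ?_⟩
  have := LinearEquiv.apply_symm_apply (LinearEquiv.ofInjective f hf)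
    (t.codRestrict (LinearMap.range f) (fun x => h x) x)
  exact congrArg Subtype.val this

variable (R) in
/-- Extension form of being cotorsion. -/
def ExtCot (C : Type u) [AddCommGroup C] [Module R C] : Prop :=
  ∀ (A B F : Type u) [AddCommGroup A] [Module R A] [AddCommGroup B] [Module R B]
    [AddCommGroup F] [Module R F] (f : A →ₗ[R] B) (p : B →ₗ[R] F),
    Function.Injective f → Function.Surjective p → (∀ b, p b = 0 ↔ ∃ a, f a = b) →
    Module.Flat R F → ∀ g : A →ₗ[R] C, ∃ h : B →ₗ[R] C, ∀ a, h (f a) = g a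

lemma exists_coboundary {F C : Type u} [AddCommGroup F] [Module R F]
    [AddCommGroup C] [Module R C] (P : ProjectiveResolution (ModuleCat.of R F))
    (h : extVanish R 1 F C) (φ : P.complex.X 1 ⟶ ModuleCat.of R C)
    (hφ : P.complex.d 2 1 ≫ φ = 0) :
    ∃ ψ : P.complex.X 0 ⟶ ModuleCat.of R C, P.complex.d 1 0 ≫ ψ = φ := by
  have h0 : Limits.IsZero (((Ext R (ModuleCat.{u} R) 1).obj
      (Opposite.op (ModuleCat.of R F))).obj (ModuleCat.of R C)) := by
    have : Subsingleton (((Ext R (ModuleCat.{u} R) 1).obj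
      (Opposite.op (ModuleCat.of R F))).obj (ModuleCat.of R C)) := h
    exact ModuleCat.isZero_of_subsingleton _
  have h1 := h0.of_iso (P.isoExt (R := R) 1 (ModuleCat.of R C)).symm
  rw [← HomologicalComplex.exactAt_iff_isZero_homology,
    HomologicalComplex.exactAt_iff' _ 0 1 2 (by simp) (by simp),
    ShortComplex.moduleCat_exact_iff] at h1
  exact h1 φ hφ

lemma extCot_of_isCotorsion {C : Type u} [AddCommGroup C] [Module R C]
    (hC : IsCotorsion R C) : ExtCot R C := by
  intro A B F _ _ _ _ _ _ f p hf hp hex hF g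
  let P := projectiveResolution (ModuleCat.of R F)
  have hepi : Epi (P.π.f 0) := inferInstance
  let π : P.complex.X 0 ⟶ ModuleCat.of R F := P.π.f 0
  have hπ : Function.Surjective π := (ModuleCat.epi_iff_surjective _).1 hepi
  have hdπ : P.complex.d 1 0 ≫ π = 0 := P.complex_d_comp_π_f_zero
  have hex0 : ∀ x, π x = 0 → ∃ y, P.complex.d 1 0 y = x :=
    (ShortComplex.moduleCat_exact_iff _).1 P.exact₀
  have : Epi (ModuleCat.ofHom p) := (ModuleCat.epi_iff_surjective _).2 hp
  let l0 : P.complex.X 0 ⟶ ModuleCat.of R B := Projective.factorThru π (ModuleCat.ofHom p)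
  have hl0 : ∀ x, p (l0 x) = π x := fun x =>
    congrArg (fun k => k.hom x) (Projective.factorThru_comp π (ModuleCat.ofHom p))
  have hd1 : ∀ y, π (P.complex.d 1 0 y) = 0 := fun y => congrArg (fun k => k.hom y) hdπ
  obtain ⟨l1, hl1⟩ := exists_factor_of_injective f hf (P.complex.d 1 0 ≫ l0).hom
    (fun x => (hex _).1 (by
      change p (l0 (P.complex.d 1 0 x)) = 0
      rw [hl0, hd1]))
  have hl1' : ∀ y, f (l1 y) = l0 (P.complex.d 1 0 y) := hl1
  have hdd : ∀ z, P.complex.d 1 0 (P.complex.d 2 1 z) = 0 := fun z =>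
    congrArg (fun k => k.hom z) (P.complex.d_comp_d 2 1 0)
  obtain ⟨ψ, hψ⟩ := exists_coboundary P (hC F hF) (ModuleCat.ofHom (g.comp l1)) (by
    ext z
    change g (l1 (P.complex.d 2 1 z)) = 0
    have : l1 (P.complex.d 2 1 z) = 0 := hf (by rw [hl1', hdd, map_zero, map_zero])
    rw [this, map_zero])
  have hψ' : ∀ y, ψ (P.complex.d 1 0 y) = g (l1 y) := fun y =>
    congrArg (fun k => k.hom y) hψ
  obtain ⟨h, hh⟩ := exists_factor_of_surjective (f.coprod l0.hom)
    (by
      intro b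
      obtain ⟨x, hx⟩ := hπ (p b)
      obtain ⟨a, ha⟩ := (hex (b - l0 x)).1 (by rw [map_sub, hl0, hx, sub_self])
      refine ⟨(a, x), ?_⟩
      change f a + l0 x = b
      rw [ha, sub_add_cancel])
    (g.coprod ψ.hom)
    (by
      rintro ⟨a, x⟩ hax
      change f a + l0 x = 0 at hax
      change g a + ψ x = 0
      have hx : π x = 0 := by
        have h2 := congrArg p hax
        rwa [map_add, (hex (f a)).2 ⟨a, rfl⟩, zero_add, hl0, map_zero] at h2
      obtain ⟨y, rfl⟩ := hex0 x hx
      have : a + l1 y = 0 := hf (by rw [map_add, hl1', hax, map_zero])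
      rw [hψ', ← map_add, this, map_zero])
  refine ⟨h, fun a => ?_⟩
  simpa using hh (a, 0)

lemma flat_of_exact {A B F : Type u} [AddCommGroup A] [Module R A] [AddCommGroup B] [Module R B]
    [AddCommGroup F] [Module R F] (f : A →ₗ[R] B) (p : B →ₗ[R] F)
    (hf : Function.Injective f) (hp : Function.Surjective p)
    (hex : ∀ b, p b = 0 ↔ ∃ a, f a = b) (hB : Module.Flat R B) (hF : Module.Flat R F) :
    Module.Flat R A := by
  rw [Module.Flat.iff_rTensor_preserves_injective_linearMap]
  intro N N' _ _ _ _ k hk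
  have h1 : Function.Injective (f.lTensor N) :=
    LinearMap.lTensor_injective_of_exact_of_flat p hp f hf hex N
  have h2 : Function.Injective (k.rTensor B) :=
    Module.Flat.rTensor_preserves_injective_linearMap k hk
  have h3 : (f.lTensor N').comp (k.rTensor A) = (k.rTensor B).comp (f.lTensor N) := by
    rw [LinearMap.lTensor_comp_rTensor, LinearMap.rTensor_comp_lTensor]
  have h4 : Function.Injective ((f.lTensor N').comp (k.rTensor A)) := by
    rw [h3]; exact h2.comp h1
  exact Function.Injective.of_comp (f := f.lTensor N') h4

/-- Quotients of cotorsion by cotorsion are cotorsion. -/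
lemma extCot_quotient {Z C Z' : Type u} [AddCommGroup Z] [Module R Z] [AddCommGroup C]
    [Module R C] [AddCommGroup Z'] [Module R Z'] (i : Z →ₗ[R] C) (q : C →ₗ[R] Z')
    (hi : Function.Injective i) (hq : Function.Surjective q)
    (hex : ∀ b, q b = 0 ↔ ∃ a, i a = b) (hZ : ExtCot R Z) (hC : ExtCot R C) :
    ExtCot R Z' := by
  intro A B F _ _ _ _ _ _ f p hf hp hfp hF g
  obtain ⟨Q, _, _, _, π, hπ⟩ : ∃ (Q : Type u) (_ : AddCommGroup Q) (_ : Module R Q)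
      (_ : Module.Projective R Q) (π : Q →ₗ[R] F), Function.Surjective π :=
    ⟨F →₀ R, inferInstance, inferInstance, inferInstance,
      Finsupp.linearCombination R (id : F → F),
      Finsupp.linearCombination_surjective _ Function.surjective_id⟩
  let K := LinearMap.ker π
  have hKex : ∀ b, π b = 0 ↔ ∃ a, K.subtype a = b :=
    (fun b => ⟨fun h => ⟨⟨b, h⟩, rfl⟩, by rintro ⟨a, rfl⟩; exact a.2⟩)
  have hK : Module.Flat R K := flat_of_exact (A := K) (B := Q) (F := F) K.subtype π K.subtype_injective hπ
    hKex inferInstance hF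
  obtain ⟨l0, hl0⟩ := Module.projective_lifting_property p π hp
  have hl0' : ∀ x, p (l0 x) = π x := fun x => LinearMap.congr_fun hl0 x
  obtain ⟨l1, hl1⟩ := exists_factor_of_injective (M := K) f hf (l0.comp K.subtype)
    (fun x : K => (hfp _).1 ((hl0' x).trans x.2))
  let E := LinearMap.ker ((q.comp (LinearMap.fst R C K)) - (g.comp l1).comp (LinearMap.snd R C K))
  have hE : ∀ e : E, q e.1.1 = g (l1 e.1.2) := fun e => sub_eq_zero.1 e.2
  let j : Z →ₗ[R] E := ((LinearMap.inl R C K).comp i).codRestrict E (fun z => by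
    change q (i z) - g (l1 0) = 0
    rw [(hex _).2 ⟨z, rfl⟩, map_zero, map_zero, sub_zero])
  let r : E →ₗ[R] K := (LinearMap.snd R C K).comp E.subtype
  have hj : ∀ z, (j z).1 = (i z, 0) := fun z => rfl
  have hr : Function.Surjective r := by
    intro k
    obtain ⟨c, hc⟩ := hq (g (l1 k))
    exact ⟨⟨(c, k), sub_eq_zero.2 hc⟩, rfl⟩
  obtain ⟨t, ht⟩ := hZ Z E K j r
    (fun a b hab => hi (congrArg (fun e : E => e.1.1) hab)) hr
    (by
      intro e
      constructor
      · intro he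
        have he' : e.1.2 = 0 := he
        obtain ⟨z, hz⟩ := (hex e.1.1).1 (by rw [hE, he', map_zero, map_zero])
        exact ⟨z, Subtype.ext (Prod.ext hz he'.symm)⟩
      · rintro ⟨z, rfl⟩
        rfl) hK LinearMap.id
  obtain ⟨w, hw⟩ := exists_factor_of_surjective r hr
    ((LinearMap.fst R C K).comp E.subtype - i.comp t) (by
      intro e he
      have he' : e.1.2 = 0 := he
      obtain ⟨z, hz⟩ := (hex e.1.1).1 (by rw [hE, he', map_zero, map_zero])
      have hez : e = j z := Subtype.ext (Prod.ext hz.symm he')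
      subst hez
      change i z - i (t (j z)) = 0
      rw [ht]; exact sub_self _)
  have hqw : ∀ k, q (w k) = g (l1 k) := by
    intro k
    obtain ⟨e, rfl⟩ := hr k
    rw [hw]
    change q (e.1.1 - i (t e)) = _
    rw [map_sub, (hex (i (t e))).2 ⟨_, rfl⟩, sub_zero, hE]
    rfl
  obtain ⟨v, hv⟩ := hC K Q F K.subtype π K.subtype_injective hπ
    hKex hF w
  obtain ⟨h, hh⟩ := exists_factor_of_surjective (f.coprod l0)
    (by
      intro b
      obtain ⟨x, hx⟩ := hπ (p b)
      obtain ⟨a, ha⟩ := (hfp (b - l0 x)).1 (by rw [map_sub, hl0', hx, sub_self])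
      refine ⟨(a, x), ?_⟩
      change f a + l0 x = b
      rw [ha, sub_add_cancel])
    (g.coprod (q.comp v))
    (by
      rintro ⟨a, x⟩ hax
      change f a + l0 x = 0 at hax
      change g a + q (v x) = 0
      have hx : π x = 0 := by
        have h2 := congrArg p hax
        rwa [map_add, (hfp (f a)).2 ⟨a, rfl⟩, zero_add, hl0', map_zero] at h2
      have hl1x : f (l1 ⟨x, hx⟩) = l0 x := hl1 ⟨x, hx⟩
      have h5 : a + l1 ⟨x, hx⟩ = 0 := hf (by rw [map_add, hl1x, hax, map_zero])
      have h6 : v x = w ⟨x, hx⟩ := hv ⟨x, hx⟩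
      rw [h6, hqw, ← map_add, h5, map_zero])
  refine ⟨h, fun a => ?_⟩
  simpa using hh (a, 0)

lemma contraction_aux (C : ℤ → Type u) [∀ i, AddCommGroup (C i)] [∀ i, Module R (C i)]
    (d : ∀ i : ℤ, C i →ₗ[R] C (i + 1))
    (hbdd : ∃ a b : ℤ, ∀ i, (i < a ∨ b < i) → Subsingleton (C i))
    (hacyc : ∀ i, LinearMap.ker (d (i + 1)) = LinearMap.range (d i))
    (hflat : ∀ i, Module.Flat R (C i))
    (hcot : ∀ i, IsCotorsion R (C i)) :
    ∃ s : ∀ i : ℤ, C (i + 1) →ₗ[R] C i,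
      ∀ i, (s (i + 1)).comp (d (i + 1)) + (d i).comp (s i) = LinearMap.id := by
  obtain ⟨a, b, hab⟩ := hbdd
  let Z : ∀ i, Submodule R (C i) := fun i => LinearMap.ker (d i)
  have hdd : ∀ i x, d i x ∈ Z (i + 1) := fun i x => by
    change d i x ∈ LinearMap.ker (d (i + 1))
    rw [hacyc]; exact ⟨x, rfl⟩
  let q : ∀ i, C i →ₗ[R] Z (i + 1) := fun i => (d i).codRestrict (Z (i + 1)) (hdd i)
  have hqv : ∀ i x, ((q i x : Z (i + 1)) : C (i + 1)) = d i x := fun i x => rfl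
  have hq : ∀ i, Function.Surjective (q i) := by
    intro i z
    have hz : z.1 ∈ LinearMap.range (d i) := by rw [← hacyc]; exact z.2
    obtain ⟨x, hx⟩ := hz
    exact ⟨x, Subtype.ext hx⟩
  have hex : ∀ i (x : C i), q i x = 0 ↔ ∃ z, (Z i).subtype z = x := by
    intro i x
    constructor
    · intro h
      exact ⟨⟨x, congrArg Subtype.val h⟩, rfl⟩
    · rintro ⟨z, rfl⟩
      exact Subtype.ext z.2
  have hZflat : ∀ i, Module.Flat R (Z i) := by
    have step : ∀ i, Module.Flat R (Z (i + 1)) → Module.Flat R (Z i) := fun i h =>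
      flat_of_exact (Z i).subtype (q i) (Z i).subtype_injective (hq i) (hex i) (hflat i) h
    have base : ∀ i, b < i → Module.Flat R (Z i) := by
      intro i hi
      have := hab i (Or.inr hi)
      infer_instance
    have key : ∀ (n : ℕ) (i : ℤ), b < i + n → Module.Flat R (Z i) := by
      intro n
      induction n with
      | zero => intro i hi; exact base i (by simpa using hi)
      | succ n ih => intro i hi; exact step i (ih (i + 1) (by push_cast at hi; omega))
    intro i
    exact key (b + 1 - i).toNat i (by omega)
  have hZcot : ∀ i, ExtCot R (Z i) := by
    have step : ∀ i, ExtCot R (Z i) → ExtCot R (Z (i + 1)) := fun i h =>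
      extCot_quotient (Z i).subtype (q i) (Z i).subtype_injective (hq i) (hex i) h
        (extCot_of_isCotorsion (hcot i))
    have base : ∀ i, i < a → ExtCot R (Z i) := by
      intro i hi
      have := hab i (Or.inl hi)
      intro A B F _ _ _ _ _ _ f p _ _ _ _ g
      exact ⟨0, fun a => Subsingleton.elim _ _⟩
    have key : ∀ (n : ℕ) (i : ℤ), i < a + n → ExtCot R (Z i) := by
      intro n
      induction n with
      | zero => intro i hi; exact base i (by simpa using hi)
      | succ n ih =>
        intro i hi
        obtain ⟨k, rfl⟩ : ∃ k, i = k + 1 := ⟨i - 1, by ring⟩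
        exact step k (ih k (by push_cast at hi; omega))
    intro i
    exact key (i + 1 - a).toNat i (by omega)
  choose r hr using fun i => hZcot i (Z i) (C i) (Z (i + 1)) (Z i).subtype (q i)
    (Z i).subtype_injective (hq i) (hex i) (hZflat (i + 1)) LinearMap.id
  choose σ hσ using fun i => exists_factor_of_surjective (q i) (hq i)
    (LinearMap.id - (Z i).subtype.comp (r i)) (by
      intro x hx
      obtain ⟨z, rfl⟩ := (hex i x).1 hx
      change (Z i).subtype z - (Z i).subtype (r i ((Z i).subtype z)) = 0
      rw [hr]; exact sub_self _)
  have hσ' : ∀ i x, σ i (q i x) = x - (r i x : C i) := hσ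
  have hqσ : ∀ i z, q i (σ i z) = z := by
    intro i z
    obtain ⟨x, rfl⟩ := hq i z
    rw [hσ', map_sub, (hex i (r i x)).2 ⟨_, rfl⟩, sub_zero]
  refine ⟨fun i => (σ i).comp (r (i + 1)), fun i => ?_⟩
  ext x
  change σ (i + 1) (r (i + 1 + 1) (d (i + 1) x)) + d i (σ i (r (i + 1) x)) = x
  have h1 : r (i + 1 + 1) (d (i + 1) x) = q (i + 1) x := hr (i + 1 + 1) (q (i + 1) x)
  rw [h1, hσ', ← hqv, hqσ, sub_add_cancel]

end Helpers

/-- over a ring where every flat module has cotorsion dimension at most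
`n`, every bounded acyclic complex of flat modules with cotorsion components is
contractible. -/
theorem bounded_acyclic_flat_cotorsion_complex_contractible (R : Type u) [CommRing R]
    (n : ℕ)
    (hcd : ∀ (F : Type u) [AddCommGroup F] [Module R F], Module.Flat R F →
      cotorsionDimLE R F n)
    (C : ℤ → Type u) [∀ i, AddCommGroup (C i)] [∀ i, Module R (C i)]
    (d : ∀ i : ℤ, C i →ₗ[R] C (i + 1))
    (hbdd : ∃ a b : ℤ, ∀ i, (i < a ∨ b < i) → Subsingleton (C i))
    (hacyc : ∀ i, LinearMap.ker (d (i + 1)) = LinearMap.range (d i))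
    (hflat : ∀ i, Module.Flat R (C i))
    (hcot : ∀ i, IsCotorsion R (C i)) :
    ∃ s : ∀ i : ℤ, C (i + 1) →ₗ[R] C i,
      ∀ i, (s (i + 1)).comp (d (i + 1)) + (d i).comp (s i) = LinearMap.id := by
  exact contraction_aux C d hbdd hacyc hflat hcot
end

section
/- Let R be a noetherian commutative ring of Krull dimension n. Then every flat R-module has projective dimension at most n, and consequently every flat R-module has cotorsion dimension at most n. -/
open CategoryTheory

universe u

/-- A projective resolution `0 → Pₙ → ⋯ → P₀ → M → 0` of length `n`. -/
structure FiniteProjectiveResolution (R : Type u) [CommRing R]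
    (M : Type u) [AddCommGroup M] [Module R M] (n : ℕ) where
  P : ℕ → Type u
  [acg : ∀ i, AddCommGroup (P i)]
  [mod : ∀ i, Module R (P i)]
  π : P 0 →ₗ[R] M
  d : ∀ i, P (i + 1) →ₗ[R] P i
  hπ : Function.Surjective π
  hd0 : LinearMap.ker π = LinearMap.range (d 0)
  hd : ∀ i, LinearMap.ker (d i) = LinearMap.range (d (i + 1))
  hproj : ∀ i, Module.Projective R (P i)
  htail : ∀ i, n < i → Subsingleton (P i)

/-- `E` is essential over `N`, inside a module. -/
def EssIn {R M : Type u} [CommRing R] [AddCommGroup M] [Module R M] (N E : Submodule R M) : Prop :=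
  N ≤ E ∧ ∀ y ∈ E, y ≠ 0 → ∃ r : R, r • y ∈ N ∧ r • y ≠ 0

theorem exists_injective_embedding (R M : Type u) [CommRing R] [AddCommGroup M] [Module R M] :
    ∃ (I : Type u) (_ : AddCommGroup I) (_ : Module R I) (f : M →ₗ[R] I),
      Module.Injective R I ∧ Function.Injective f := by
  let X := ModuleCat.of R M
  let J := CategoryTheory.Injective.under X
  refine ⟨J, inferInstance, inferInstance, (CategoryTheory.Injective.ι X).hom, ?_, ?_⟩
  · have : CategoryTheory.Injective (ModuleCat.of R J) :=
      inferInstanceAs (CategoryTheory.Injective (CategoryTheory.Injective.under X))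
    exact Module.injective_module_of_injective_object R J
  · exact (ModuleCat.mono_iff_injective _).1 inferInstance

theorem ext_factor {R A B J : Type u} [CommRing R] [AddCommGroup A] [Module R A]
    [AddCommGroup B] [Module R B] [AddCommGroup J] [Module R J] [Module.Injective R J]
    (β : A →ₗ[R] B) (f : A →ₗ[R] J) (h : ∀ x, β x = 0 → f x = 0) :
    ∃ g : B →ₗ[R] J, ∀ x, g (β x) = f x := by
  have hle : LinearMap.ker β ≤ LinearMap.ker f := fun x hx => h x hx
  obtain ⟨g, hg⟩ := Module.Injective.extension_property R J _ _
    ((LinearMap.ker β).liftQ β le_rfl)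
    (LinearMap.ker_eq_bot.1 (Submodule.ker_liftQ_eq_bot _ _ _ le_rfl))
    ((LinearMap.ker β).liftQ f hle)
  refine ⟨g, fun x => ?_⟩
  have := LinearMap.congr_fun hg (Submodule.Quotient.mk x)
  simpa using this

theorem exists_max_ess {R M : Type u} [CommRing R] [AddCommGroup M] [Module R M]
    (N : Submodule R M) : ∃ E, Maximal (EssIn N) E := by
  have := zorn_le_nonempty₀ (α := Submodule R M) {E | EssIn N E} ?_ N
    ⟨le_rfl, fun y hy h0 => ⟨1, by simpa using hy, by simpa using h0⟩⟩
  · obtain ⟨E, -, hE⟩ := this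
    exact ⟨E, hE⟩
  · intro c hc hch y hy
    refine ⟨sSup c, ⟨(hc hy).1.trans (le_sSup hy), ?_⟩, fun z hz => le_sSup hz⟩
    intro x hx h0
    rw [Submodule.mem_sSup_of_directed ⟨y, hy⟩ hch.directedOn] at hx
    obtain ⟨W, hW, hxW⟩ := hx
    exact (hc hW).2 x hxW h0

theorem exists_max_disj {R M : Type u} [CommRing R] [AddCommGroup M] [Module R M]
    (E : Submodule R M) : ∃ N, Maximal (fun N => Disjoint E N) N := by
  have := zorn_le_nonempty₀ (α := Submodule R M) {N | Disjoint E N} ?_ ⊥ disjoint_bot_right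
  · obtain ⟨N, -, hN⟩ := this
    exact ⟨N, hN⟩
  · intro c hc hch y hy
    refine ⟨sSup c, ?_, fun z hz => le_sSup hz⟩
    rw [Set.mem_ofPred_eq, Submodule.disjoint_def]
    intro x hxE hx
    rw [Submodule.mem_sSup_of_directed ⟨y, hy⟩ hch.directedOn] at hx
    obtain ⟨W, hW, hxW⟩ := hx
    exact (Submodule.disjoint_def.1 (hc hW)) x hxE hxW

theorem injective_of_max_ess {R M : Type u} [CommRing R] [AddCommGroup M] [Module R M]
    [Module.Injective R M] (N E : Submodule R M) (hE : Maximal (EssIn N) E) :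
    Module.Injective R E := by
  obtain ⟨D, hD⟩ := exists_max_disj E
  have hdis := Submodule.disjoint_def.1 hD.prop
  -- the map E → M/D is injective and essential
  obtain ⟨h, hh⟩ := ext_factor (J := M) (D.mkQ.comp E.subtype) E.subtype (by
    intro x hx
    simp only [LinearMap.comp_apply, Submodule.mkQ_apply, Submodule.Quotient.mk_eq_zero] at hx
    exact hdis _ x.2 hx)
  have key : ∀ z : M, z ∉ D → ∃ r : R, ∃ e ∈ E, e ≠ 0 ∧ r • z - e ∈ D := by
    intro z hz
    by_contra! hcon
    have : Disjoint E (D ⊔ R ∙ z) := by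
      rw [Submodule.disjoint_def]
      intro x hxE hx
      obtain ⟨d, hd, w, hw, rfl⟩ := Submodule.mem_sup.1 hx
      obtain ⟨r, rfl⟩ := Submodule.mem_span_singleton.1 hw
      by_contra hne
      refine hcon r _ hxE hne ?_
      have : r • z - (d + r • z) = -d := by abel
      rw [this]; exact D.neg_mem hd
    have h2 := hD.le_of_ge this le_sup_left
    exact hz (h2 (Submodule.mem_sup_right (Submodule.mem_span_singleton_self z)))
  let W := LinearMap.range h
  have hEW : E ≤ W := fun x hx => ⟨D.mkQ x, by simpa using hh ⟨x, hx⟩⟩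
  have hW : EssIn N W := by
    refine ⟨hE.prop.1.trans hEW, ?_⟩
    rintro _ ⟨y, rfl⟩ hy
    obtain ⟨z, rfl⟩ := D.mkQ_surjective y
    have hz : z ∉ D := by
      intro hz; apply hy
      have : D.mkQ z = 0 := by simpa using hz
      rw [this, map_zero]
    obtain ⟨r, e, heE, he0, hd⟩ := key z hz
    obtain ⟨s, hs1, hs2⟩ := hE.prop.2 e heE he0
    have hre : r • h (D.mkQ z) = e := by
      have h1 : D.mkQ (r • z) = D.mkQ e := by
        rw [← sub_eq_zero, ← map_sub]; exact (Submodule.Quotient.mk_eq_zero D).2 hd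
      rw [← map_smul, ← map_smul, h1]
      exact hh ⟨e, heE⟩
    exact ⟨s * r, by rwa [mul_smul, hre], by rwa [mul_smul, hre]⟩
  have hWE : W ≤ E := hE.le_of_ge hW hEW
  let ρ : M →ₗ[R] E := (h.comp D.mkQ).codRestrict E (fun x => hWE ⟨_, rfl⟩)
  have hρ : ∀ e : E, ρ e = e := fun e => Subtype.ext (hh e)
  refine ⟨fun X Y _ _ _ _ f hf g => ?_⟩
  obtain ⟨k, hk⟩ := Module.Injective.extension_property R M _ _ f hf (E.subtype.comp g)
  refine ⟨ρ.comp k, fun x => ?_⟩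
  have := LinearMap.congr_fun hk x
  simp only [LinearMap.comp_apply, Submodule.subtype_apply] at this ⊢
  rw [this, hρ]

theorem exists_hull {R : Type u} [CommRing R] (p : Ideal R) :
    ∃ (E : Type u) (_ : AddCommGroup E) (_ : Module R E) (x : E),
      Module.Injective R E ∧ (∀ r : R, r • x = 0 ↔ r ∈ p) ∧
      ∀ y : E, y ≠ 0 → ∃ r t : R, r • y = t • x ∧ r • y ≠ 0 := by
  obtain ⟨I, _, _, f, hI, hf⟩ := exists_injective_embedding R (R ⧸ p)
  let x0 : I := f (Ideal.Quotient.mk p 1)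
  have hx0 : ∀ r : R, r • x0 = 0 ↔ r ∈ p := by
    intro r
    have : r • x0 = f (Ideal.Quotient.mk p r) := by
      simp only [x0, ← map_smul]
      congr 1
      rw [← Ideal.Quotient.mk_eq_mk, ← Submodule.Quotient.mk_smul]
      simp
    rw [this, map_eq_zero_iff f hf, Ideal.Quotient.eq_zero_iff_mem]
  obtain ⟨E, hE⟩ := exists_max_ess (R ∙ x0)
  have hmem : x0 ∈ E := hE.prop.1 (Submodule.mem_span_singleton_self x0)
  refine ⟨E, inferInstance, inferInstance, ⟨x0, hmem⟩, injective_of_max_ess _ _ hE, ?_, ?_⟩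
  · intro r
    rw [← hx0, Subtype.ext_iff]; rfl
  · intro y hy
    obtain ⟨r, h1, h2⟩ := hE.prop.2 y y.2 (by simpa using hy)
    obtain ⟨t, ht⟩ := Submodule.mem_span_singleton.1 h1
    refine ⟨r, t, Subtype.ext ht.symm, fun h => h2 ?_⟩
    simpa using congrArg Subtype.val h

/-- `κ` generates the syzygies of `a`. -/
def IsSyz {R : Type u} [CommRing R] {l k : ℕ} (a : Fin l → R) (κ : Fin k → Fin l → R) : Prop :=
  (∀ j, ∑ i, κ j i * a i = 0) ∧
    ∀ c : Fin l → R, ∑ i, c i * a i = 0 → c ∈ Submodule.span R (Set.range κ)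

theorem exists_syz {R : Type u} [CommRing R] [IsNoetherianRing R] {l : ℕ} (a : Fin l → R) :
    ∃ (k : ℕ) (κ : Fin k → Fin l → R), IsSyz a κ := by
  let A : (Fin l → R) →ₗ[R] R := Fintype.linearCombination R a
  obtain ⟨k, κ, hκ⟩ := Submodule.fg_iff_exists_fin_generating_family.1
    (IsNoetherian.noetherian (LinearMap.ker A))
  refine ⟨k, κ, fun j => ?_, fun c hc => ?_⟩
  · have : κ j ∈ LinearMap.ker A := hκ ▸ Submodule.subset_span ⟨j, rfl⟩
    simpa [A, Fintype.linearCombination_apply] using this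
  · rw [hκ]
    simpa [A, Fintype.linearCombination_apply] using hc

/-- equational property for a given pair `(a, κ)` -/
def EqProp {R : Type u} [CommRing R] {l k : ℕ} (a : Fin l → R) (κ : Fin k → Fin l → R)
    (M : Type u) [AddCommGroup M] [Module R M] : Prop :=
  ∀ x : Fin l → M, ∑ i, a i • x i = 0 → ∃ y : Fin k → M, ∀ i, x i = ∑ j, κ j i • y j

theorem flat_of_eqProp {R : Type u} [CommRing R] [IsNoetherianRing R]
    (M : Type u) [AddCommGroup M] [Module R M]
    (h : ∀ {l k : ℕ} (a : Fin l → R) (κ : Fin k → Fin l → R), IsSyz a κ → EqProp a κ M) :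
    Module.Flat R M := by
  apply Module.Flat.of_forall_isTrivialRelation
  intro l f x hfx
  obtain ⟨k, κ, hκ⟩ := exists_syz f
  obtain ⟨y, hy⟩ := h f κ hκ x hfx
  rw [Module.isTrivialRelation_iff_vanishesTrivially]
  refine ⟨k, fun i j => κ j i, y, fun i => hy i, fun j => ?_⟩
  rw [← hκ.1 j]
  simp [mul_comm]

/-- solution of linear systems in injective modules -/
theorem inj_solve {R : Type u} [CommRing R] {l k : ℕ} {a : Fin l → R} {κ : Fin k → Fin l → R}
    (h : IsSyz a κ) (Q : Type u) [AddCommGroup Q] [Module R Q] [Module.Injective R Q]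
    (v : Fin l → Q) (hv : ∀ j, ∑ i, κ j i • v i = 0) : ∃ w : Q, ∀ i, v i = a i • w := by
  let A : (Fin l → R) →ₗ[R] R := Fintype.linearCombination R a
  let V : (Fin l → R) →ₗ[R] Q := Fintype.linearCombination R v
  obtain ⟨g, hg⟩ := ext_factor A V (by
    intro c hc
    have hc' := h.2 c (by simpa [A, Fintype.linearCombination_apply] using hc)
    have : Submodule.span R (Set.range κ) ≤ LinearMap.ker V := by
      rw [Submodule.span_le]
      rintro _ ⟨j, rfl⟩
      simpa [V, Fintype.linearCombination_apply] using hv j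
    exact this hc')
  refine ⟨g 1, fun i => ?_⟩
  have := hg (Pi.single i 1)
  simp only [A, V, Fintype.linearCombination_apply_single, one_smul] at this
  rw [← this, ← map_smul]; simp

theorem eqProp_hom {R : Type u} [CommRing R] {l k : ℕ} {a : Fin l → R} {κ : Fin k → Fin l → R}
    (h : IsSyz a κ) (Q J : Type u) [AddCommGroup Q] [Module R Q] [Module.Injective R Q]
    [AddCommGroup J] [Module R J] [Module.Injective R J] : EqProp a κ (Q →ₗ[R] J) := by
  intro x hx
  let β : (Fin l → Q) →ₗ[R] (Fin k → Q) :=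
    LinearMap.pi fun j => ∑ i, κ j i • LinearMap.proj i
  let f : (Fin l → Q) →ₗ[R] J := ∑ i, (x i).comp (LinearMap.proj i)
  obtain ⟨g, hg⟩ := ext_factor β f (by
    intro v hv
    obtain ⟨w, hw⟩ := inj_solve h Q v (by
      intro j
      simpa [β] using congrFun hv j)
    have h2 := LinearMap.congr_fun hx w
    simp only [f, LinearMap.sum_apply, LinearMap.comp_apply, LinearMap.proj_apply]
    simp only [hw, map_smul]
    simpa using h2)
  refine ⟨fun j => g.comp (LinearMap.single R (fun _ => Q) j), fun i => ?_⟩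
  ext q
  have := hg (Pi.single i q)
  have h1 : f (Pi.single i q) = x i q := by
    simp only [f, LinearMap.sum_apply, LinearMap.comp_apply, LinearMap.proj_apply]
    rw [Finset.sum_eq_single i]
    · simp
    · intro b _ hb; simp [hb]
    · simp
  have h2 : β (Pi.single i q) = ∑ j, Pi.single j (κ j i • q) := by
    ext j
    simp only [β, LinearMap.pi_apply, LinearMap.sum_apply, LinearMap.smul_apply,
      LinearMap.proj_apply, Finset.sum_apply]
    rw [Finset.sum_eq_single i, Finset.sum_eq_single j]
    · simp
    · intro b _ hb; simp [Ne.symm hb]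
    · simp
    · intro b _ hb; simp [hb]
    · simp
  rw [← h1, ← this, h2, map_sum]
  simp only [LinearMap.sum_apply, LinearMap.smul_apply, LinearMap.comp_apply]
  refine Finset.sum_congr rfl fun j _ => ?_
  rw [← map_smul]
  congr 1
  simp [Pi.single_smul]

open TensorProduct in
theorem injective_tensor {R : Type u} [CommRing R] [IsNoetherianRing R]
    (G E : Type u) [AddCommGroup G] [Module R G] [Module.Flat R G]
    [AddCommGroup E] [Module R E] [Module.Injective R E] : Module.Injective R (G ⊗[R] E) := by
  apply Module.Baer.injective
  intro I g
  obtain ⟨l, a, ha⟩ := Submodule.fg_iff_exists_fin_generating_family.1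
    (IsNoetherian.noetherian I)
  obtain ⟨k, κ, hκ⟩ := exists_syz a
  have hmem : ∀ i, a i ∈ I := fun i => ha ▸ Submodule.subset_span ⟨i, rfl⟩
  let α : E →ₗ[R] (Fin l → E) := LinearMap.pi fun i => a i • LinearMap.id
  let β : (Fin l → E) →ₗ[R] (Fin k → E) :=
    LinearMap.pi fun j => ∑ i, κ j i • LinearMap.proj i
  have hex : Function.Exact α β := by
    intro v
    constructor
    · intro hv
      obtain ⟨w, hw⟩ := inj_solve hκ E v (by
        intro j
        simpa [β] using congrFun hv j)
      exact ⟨w, by ext i; simp [α, hw]⟩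
    · rintro ⟨w, rfl⟩
      ext j
      simp only [β, α, LinearMap.pi_apply, LinearMap.sum_apply, LinearMap.smul_apply,
        LinearMap.proj_apply, LinearMap.id_apply, smul_smul, ← Finset.sum_smul, hκ.1 j, zero_smul,
        Pi.zero_apply]
  have hexT := Module.Flat.lTensor_exact (R := R) G hex
  let z : Fin l → G ⊗[R] E := fun i => g ⟨a i, hmem i⟩
  have hz : ∀ j, ∑ i, κ j i • z i = 0 := by
    intro j
    simp only [z, ← map_smul, ← map_sum]
    convert map_zero g
    ext
    simpa using hκ.1 j
  let e := TensorProduct.piRight R R G (fun _ : Fin l => E)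
  let e' := TensorProduct.piRight R R G (fun _ : Fin k => E)
  have hcomm : ∀ t, e' (β.lTensor G t) = fun j => ∑ i, κ j i • e t i := by
    intro t
    induction t with
    | zero => ext; simp
    | add x y hx hy => simp only [map_add, hx, hy]; ext j; simp [Finset.sum_add_distrib]
    | tmul x v =>
      ext j
      simp [e, e', β, TensorProduct.tmul_sum]
  have hcomm2 : ∀ t i, e (α.lTensor G t) i = a i • t := by
    intro t i
    induction t with
    | zero => simp
    | add x y hx hy => simp only [map_add, Pi.add_apply, hx, hy, smul_add]
    | tmul x v => simp [e, α]
  have h0 : β.lTensor G (e.symm z) = 0 := by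
    apply e'.injective
    rw [hcomm, map_zero]
    ext j
    simpa using hz j
  obtain ⟨w, hw⟩ := (hexT _).1 h0
  refine ⟨LinearMap.toSpanSingleton R _ w, ?_⟩
  have hi : ∀ i, a i • w = z i := by
    intro i
    rw [← hcomm2, hw]; simp
  intro x hx
  have hx' := hx
  rw [← ha] at hx'
  obtain ⟨c, hc⟩ := (Submodule.mem_span_range_iff_exists_fun R).1 hx'
  have : (⟨x, hx⟩ : I) = ∑ i, c i • ⟨a i, hmem i⟩ := by
    ext; simp [← hc]
  rw [this, map_sum, LinearMap.toSpanSingleton_apply, ← hc, Finset.sum_smul]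
  refine Finset.sum_congr rfl fun i _ => ?_
  rw [smul_assoc, hi, map_smul]

/-- a map vanishing on the `q`-torsion lies in `q • Hom` -/
theorem hom_mem_of_vanish {R : Type u} [CommRing R] {l : ℕ} (a : Fin l → R)
    (Q J : Type u) [AddCommGroup Q] [Module R Q]
    [AddCommGroup J] [Module R J] [Module.Injective R J] (f : Q →ₗ[R] J)
    (hf : ∀ x, (∀ i, a i • x = 0) → f x = 0) :
    ∃ g : Fin l → (Q →ₗ[R] J), f = ∑ i, a i • g i := by
  let β : Q →ₗ[R] (Fin l → Q) := LinearMap.pi fun i => a i • LinearMap.id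
  obtain ⟨g, hg⟩ := ext_factor β f (by
    intro x hx
    exact hf x fun i => by simpa [β] using congrFun hx i)
  refine ⟨fun i => g.comp (LinearMap.single R (fun _ => Q) i), ?_⟩
  ext x
  rw [← hg]
  have : β x = ∑ i, Pi.single i (a i • x) := by
    ext j
    simp only [β, LinearMap.pi_apply, LinearMap.smul_apply, LinearMap.id_apply, Finset.sum_apply]
    rw [Finset.sum_eq_single j]
    · simp
    · intro b _ hb; simp [Ne.symm hb]
    · simp
  rw [this, map_sum]
  simp only [LinearMap.sum_apply, LinearMap.smul_apply, LinearMap.comp_apply]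
  refine Finset.sum_congr rfl fun j _ => ?_
  rw [← map_smul]
  congr 1
  simp [Pi.single_smul]

/-- the extension property characterising cotorsion modules -/
def ExtProp (R : Type u) [CommRing R] (C : Type u) [AddCommGroup C] [Module R C] : Prop :=
  ∀ (P : Type u) [AddCommGroup P] [Module R P] (K : Submodule R P), Module.Flat R (P ⧸ K) →
    ∀ φ : K →ₗ[R] C, ∃ ψ : P →ₗ[R] C, ∀ x : K, ψ x = φ x

open TensorProduct in
theorem extProp_hom {R : Type u} [CommRing R] (Q J : Type u) [AddCommGroup Q] [Module R Q]
    [AddCommGroup J] [Module R J] [Module.Injective R J] : ExtProp R (Q →ₗ[R] J) := by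
  intro P _ _ K hK φ
  have hinj := LinearMap.lTensor_injective_of_exact_of_flat (R := R) K.mkQ K.mkQ_surjective
    K.subtype K.subtype_injective (LinearMap.exact_subtype_mkQ K) Q
  obtain ⟨h, hh⟩ := Module.Injective.extension_property R J _ _ _ hinj
    (TensorProduct.lift φ.flip)
  refine ⟨(TensorProduct.curry h).flip, fun x => ?_⟩
  ext q
  have := LinearMap.congr_fun hh (q ⊗ₜ x)
  simpa using this

theorem extProp_pi {R : Type u} [CommRing R] {ι : Type u} (C : ι → Type u)
    [∀ i, AddCommGroup (C i)] [∀ i, Module R (C i)] (h : ∀ i, ExtProp R (C i)) :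
    ExtProp R (∀ i, C i) := by
  intro P _ _ K hK φ
  choose ψ hψ using fun i => h i P K hK ((LinearMap.proj i).comp φ)
  exact ⟨LinearMap.pi ψ, fun x => by ext i; simpa using hψ i x⟩

theorem eqProp_pi {R : Type u} [CommRing R] {ι : Type u} (C : ι → Type u)
    [∀ i, AddCommGroup (C i)] [∀ i, Module R (C i)] {l k : ℕ} {a : Fin l → R}
    {κ : Fin k → Fin l → R} (h : ∀ i, EqProp a κ (C i)) :
    EqProp a κ (∀ i, C i) := by
  intro x hx
  choose y hy using fun s => h s (fun i => x i s) (by simpa using congrFun hx s)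
  exact ⟨fun j s => y s j, fun i => by ext s; simpa using hy s i⟩

/-- ideal-divisibility from prime divisibility -/
theorem smul_top_of_primes {R : Type u} [CommRing R] [IsNoetherianRing R]
    (M : Type u) [AddCommGroup M] [Module R M] (I : Ideal R)
    (h : ∀ q : Ideal R, q.IsPrime → I ≤ q → q • (⊤ : Submodule R M) = ⊤) :
    I • (⊤ : Submodule R M) = ⊤ := by
  induction I using IsNoetherian.induction with
  | hgt I ih =>
    by_cases h1 : I = ⊤
    · rw [h1, Submodule.top_smul]
    by_cases hp : Ideal.IsPrime I
    · exact h I hp le_rfl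
    rw [Ideal.isPrime_iff] at hp
    push Not at hp
    obtain ⟨a, b, hab, ha, hb⟩ := hp h1
    have key : ∀ c, c ∉ I → (I ⊔ Ideal.span {c}) • (⊤ : Submodule R M) = ⊤ := by
      intro c hc
      refine ih _ ?_ fun q hq hle => h q hq (le_sup_left.trans hle)
      refine lt_of_le_of_ne le_sup_left fun he => hc ?_
      rw [he]
      exact Ideal.mem_sup_right (Ideal.mem_span_singleton_self c)
    have hmul : (I ⊔ Ideal.span {a}) * (I ⊔ Ideal.span {b}) ≤ I := by
      rw [Ideal.sup_mul, Ideal.mul_sup, Ideal.mul_sup, Ideal.span_singleton_mul_span_singleton]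
      refine sup_le (sup_le Ideal.mul_le_left Ideal.mul_le_left)
        (sup_le Ideal.mul_le_right ?_)
      rwa [Ideal.span_singleton_le_iff_mem]
    refine top_le_iff.1 ?_
    calc (⊤ : Submodule R M) = (I ⊔ Ideal.span {a}) • (I ⊔ Ideal.span {b}) • ⊤ := by
          rw [key b hb, key a ha]
      _ = ((I ⊔ Ideal.span {a}) * (I ⊔ Ideal.span {b})) • ⊤ := by rw [mul_smul]
      _ ≤ I • ⊤ := Submodule.smul_mono_left hmul

open TensorProduct in
theorem tensor_inj_of_primes {R : Type u} [CommRing R] [IsNoetherianRing R]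
    (G C : Type u) [AddCommGroup G] [Module R G] [AddCommGroup C] [Module R C] [Module.Flat R C]
    (θ : G →ₗ[R] C)
    (h : ∀ q : Ideal R, q.IsPrime → ∀ g, θ g ∈ q • (⊤ : Submodule R C) →
      g ∈ q • (⊤ : Submodule R G))
    (N : Type u) [AddCommGroup N] [Module R N] [hN : Module.Finite R N] :
    Function.Injective (θ.lTensor N) := by
  induction hN using IsNoetherianRing.induction_on_isQuotientEquivQuotientPrime R with
  | subsingleton N =>
    have : Subsingleton (N ⊗[R] G) := by
      refine subsingleton_of_forall_eq 0 fun z => ?_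
      induction z with
      | zero => rfl
      | add x y hx hy => rw [hx, hy, add_zero]
      | tmul n g => rw [Subsingleton.elim n 0, TensorProduct.zero_tmul]
    exact Function.injective_of_subsingleton _
  | quotient N p e =>
    rw [injective_iff_map_eq_zero]
    intro x hx
    let e1 := (TensorProduct.congr e (LinearEquiv.refl R G)).trans
      (TensorProduct.quotTensorEquivQuotSMul G p.asIdeal)
    let e2 := (TensorProduct.congr e (LinearEquiv.refl R C)).trans
      (TensorProduct.quotTensorEquivQuotSMul C p.asIdeal)
    have hcomm : ∀ x, e2 (θ.lTensor N x) =
        Submodule.mapQ (p.asIdeal • (⊤ : Submodule R G)) (p.asIdeal • (⊤ : Submodule R C)) θ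
          (by rw [← Submodule.map_le_iff_le_comap, Submodule.map_smul'']
              exact Submodule.smul_mono le_rfl le_top) (e1 x) := by
      intro x
      induction x with
      | zero => simp
      | add x y hx hy => simp only [map_add, hx, hy]
      | tmul n g =>
        obtain ⟨r, hr⟩ := Ideal.Quotient.mk_surjective (e n)
        simp [e1, e2, ← hr]
    apply e1.injective
    rw [map_zero]
    obtain ⟨g, hg⟩ := Submodule.Quotient.mk_surjective _ (e1 x)
    have := hcomm x
    rw [hx, map_zero, ← hg, Submodule.mapQ_apply, eq_comm, Submodule.Quotient.mk_eq_zero] at this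
    rw [← hg, Submodule.Quotient.mk_eq_zero]
    exact h _ p.isPrime g this
  | exact N₁ N₂ N₃ f g hf hg hfg h1 h3 =>
    rw [injective_iff_map_eq_zero]
    intro x hx
    have hx3 : g.rTensor G x = 0 := by
      apply h3
      rw [map_zero, ← LinearMap.comp_apply, LinearMap.lTensor_comp_rTensor,
        ← LinearMap.rTensor_comp_lTensor, LinearMap.comp_apply, hx, map_zero]
    obtain ⟨y, rfl⟩ := (rTensor_exact G hfg hg x).1 hx3
    have : f.rTensor C (θ.lTensor N₁ y) = 0 := by
      rw [← LinearMap.comp_apply, LinearMap.rTensor_comp_lTensor,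
        ← LinearMap.lTensor_comp_rTensor, LinearMap.comp_apply, hx]
    have h2 : θ.lTensor N₁ y = 0 := by
      apply Module.Flat.rTensor_preserves_injective_linearMap (M := C) f hf
      rw [this, map_zero]
    have h4 : y = 0 := by
      apply h1
      rw [h2, map_zero]
    rw [h4, map_zero]

open TensorProduct in
theorem flat_quot {R : Type u} [CommRing R] [IsNoetherianRing R]
    (G C : Type u) [AddCommGroup G] [Module R G] [AddCommGroup C] [Module R C] [Module.Flat R C]
    (θ : G →ₗ[R] C)
    (h : ∀ q : Ideal R, q.IsPrime → ∀ g, θ g ∈ q • (⊤ : Submodule R C) →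
      g ∈ q • (⊤ : Submodule R G)) :
    Function.Injective θ ∧ Module.Flat R (C ⧸ LinearMap.range θ) := by
  have hN := fun (N : Type u) [AddCommGroup N] [Module R N] [Module.Finite R N] =>
    tensor_inj_of_primes G C θ h N
  constructor
  · have := hN R
    intro x y hxy
    have h1 : θ.lTensor R (1 ⊗ₜ x) = θ.lTensor R (1 ⊗ₜ y) := by simp [hxy]
    simpa using congrArg (TensorProduct.lid R G) (this h1)
  · rw [Module.Flat.iff_rTensor_injective']
    intro I
    rw [injective_iff_map_eq_zero]
    intro u hu
    have hex : Function.Exact θ (LinearMap.range θ).mkQ := LinearMap.exact_map_mkQ_range θ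
    have hsur := (LinearMap.range θ).mkQ_surjective
    obtain ⟨v, rfl⟩ := LinearMap.lTensor_surjective I hsur u
    have h1 : (LinearMap.range θ).mkQ.lTensor R (I.subtype.rTensor C v) = 0 := by
      rw [← LinearMap.comp_apply, LinearMap.lTensor_comp_rTensor,
        ← LinearMap.rTensor_comp_lTensor, LinearMap.comp_apply, hu]
    obtain ⟨w, hw⟩ := (lTensor_exact R hex hsur _).1 h1
    have hexI : Function.Exact I.subtype (Submodule.mkQ I) := LinearMap.exact_subtype_mkQ I
    have h2 : (Submodule.mkQ I).rTensor G w = 0 := by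
      apply hN (R ⧸ I)
      rw [map_zero, ← LinearMap.comp_apply, LinearMap.lTensor_comp_rTensor,
        ← LinearMap.rTensor_comp_lTensor, LinearMap.comp_apply, hw]
      exact (rTensor_exact C hexI (Submodule.mkQ_surjective I) _).2 ⟨v, rfl⟩
    obtain ⟨w', rfl⟩ := (rTensor_exact G hexI (Submodule.mkQ_surjective I) _).1 h2
    have h3 : v = θ.lTensor I w' := by
      apply Module.Flat.rTensor_preserves_injective_linearMap (M := C) I.subtype
        I.subtype_injective
      rw [← hw, ← LinearMap.comp_apply, ← LinearMap.comp_apply, LinearMap.lTensor_comp_rTensor,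
        ← LinearMap.rTensor_comp_lTensor]
    rw [h3]
    exact (lTensor_exact I hex hsur _).2 ⟨w', rfl⟩

open TensorProduct in
theorem find_g {R : Type u} [CommRing R] {l : ℕ} (a : Fin l → R) (q : Ideal R)
    (hq : q.IsPrime) (ha : Submodule.span R (Set.range a) = q)
    (G E : Type u) [AddCommGroup G] [Module R G] [Module.Flat R G]
    [AddCommGroup E] [Module R E] (x0 : E) (hx0 : ∀ r : R, r • x0 = 0 ↔ r ∈ q)
    (hess : ∀ y : E, y ≠ 0 → ∃ r t : R, r • y = t • x0 ∧ r • y ≠ 0)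
    (hdiv : ∀ r ∉ q, ∀ g' : G, ∃ g : G, g' - r • g ∈ q • (⊤ : Submodule R G))
    (c : E →ₗ[R] G ⊗[R] E) :
    ∃ g : G, ∀ y, (∀ i, a i • y = 0) → c y = g ⊗ₜ y := by
  have hmem : ∀ i, a i ∈ q := fun i => ha ▸ Submodule.subset_span ⟨i, rfl⟩
  have hkill : ∀ y : E, (∀ i, a i • y = 0) → ∀ s ∈ q, s • y = 0 := by
    intro y hy s hs
    rw [← ha] at hs
    have : Submodule.span R (Set.range a) ≤ LinearMap.ker (LinearMap.toSpanSingleton R E y) := by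
      rw [Submodule.span_le]
      rintro _ ⟨i, rfl⟩
      simpa using hy i
    simpa using this hs
  have hE : ∀ y : E, (∀ i, a i • y = 0) → ∃ r ∉ q, ∃ t : R, r • y = t • x0 := by
    intro y hy
    by_cases h0 : y = 0
    · exact ⟨1, hq.one_notMem, 0, by simp [h0]⟩
    obtain ⟨r, t, h1, h2⟩ := hess y h0
    exact ⟨r, fun hr => h2 (hkill y hy r hr), t, h1⟩
  have hreg : ∀ r ∉ q, ∀ z : G ⊗[R] E, r • z = 0 → z = 0 := by
    intro r hr z hz
    have hi : Function.Injective (LinearMap.lsmul R E r) := by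
      rw [injective_iff_map_eq_zero]
      intro y hy
      by_contra h0
      obtain ⟨s, t, h1, h2⟩ := hess y h0
      have : t ∉ q := fun ht => h2 (by rw [h1, hx0]; exact ht)
      have h3 : (r * t) • x0 = 0 := by
        rw [mul_smul, ← h1, smul_comm]
        simp only [LinearMap.lsmul_apply] at hy
        rw [hy, smul_zero]
      rcases hq.mem_or_mem ((hx0 _).1 h3) with h | h
      · exact hr h
      · exact this h
    have := Module.Flat.lTensor_preserves_injective_linearMap (M := G) _ hi
    apply this
    rw [map_zero, ← hz]
    clear hz
    induction z with
    | zero => simp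
    | add x y hx hy => simp only [map_add, hx, hy, smul_add]
    | tmul x y => simp
  let α : E →ₗ[R] (Fin l → E) := LinearMap.pi fun i => a i • LinearMap.id
  let e := TensorProduct.piRight R R G (fun _ : Fin l => E)
  have hcomm2 : ∀ t i, e (α.lTensor G t) i = a i • t := by
    intro t i
    induction t with
    | zero => simp
    | add x y hx hy => simp only [map_add, Pi.add_apply, hx, hy, smul_add]
    | tmul x v => simp [e, α]
  have h0 : α.lTensor G (c x0) = 0 := by
    apply e.injective
    ext i
    rw [hcomm2, ← map_smul, (hx0 _).2 (hmem i)]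
    simp
  obtain ⟨u, hu⟩ := (Module.Flat.lTensor_exact (R := R) G
    (LinearMap.exact_subtype_ker_map α) _).1 h0
  have hu2 : ∀ u : G ⊗[R] (LinearMap.ker α), ∃ r ∉ q, ∃ g' : G,
      r • (LinearMap.ker α).subtype.lTensor G u = g' ⊗ₜ x0 := by
    intro u
    induction u with
    | zero => exact ⟨1, hq.one_notMem, 0, by simp⟩
    | add x y hx hy =>
      obtain ⟨r, hr, g, h1⟩ := hx
      obtain ⟨s, hs, g', h2⟩ := hy
      refine ⟨r * s, fun h => (hq.mem_or_mem h).elim hr hs, s • g + r • g', ?_⟩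
      rw [map_add, smul_add, mul_smul, mul_smul, h2, smul_comm, h1, TensorProduct.add_tmul,
        TensorProduct.smul_tmul', TensorProduct.smul_tmul']
    | tmul g y =>
      obtain ⟨r, hr, t, h1⟩ := hE y (fun i => by simpa [α] using congrFun y.2 i)
      refine ⟨r, hr, t • g, ?_⟩
      rw [LinearMap.lTensor_tmul, Submodule.subtype_apply, ← TensorProduct.tmul_smul, h1,
        TensorProduct.smul_tmul]
  obtain ⟨r, hr, g', h1⟩ := hu2 u
  rw [hu] at h1
  obtain ⟨g, hg⟩ := hdiv r hr g'
  have hz : ∀ d ∈ q • (⊤ : Submodule R G), d ⊗ₜ[R] x0 = 0 := by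
    intro d hd
    induction hd using Submodule.smul_induction_on' with
    | smul s hs n hn => rw [TensorProduct.smul_tmul, (hx0 s).2 hs, TensorProduct.tmul_zero]
    | add x _ y _ hx hy => rw [TensorProduct.add_tmul, hx, hy, add_zero]
  have h2 : c x0 = g ⊗ₜ x0 := by
    rw [← sub_eq_zero]
    apply hreg r hr
    rw [smul_sub, h1, TensorProduct.smul_tmul', ← TensorProduct.sub_tmul]
    exact hz _ hg
  refine ⟨g, fun y hy => ?_⟩
  obtain ⟨r, hr, t, h3⟩ := hE y hy
  rw [← sub_eq_zero]
  apply hreg r hr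
  rw [smul_sub, ← map_smul, ← TensorProduct.tmul_smul, h3, map_smul, TensorProduct.tmul_smul, h2,
    sub_self]

/-- `G` is divisible by all primes of small coheight. -/
def ZProp (R : Type u) [CommRing R] (i : ℕ) (G : Type u) [AddCommGroup G] [Module R G] : Prop :=
  ∀ q : PrimeSpectrum R, Order.coheight q < i → q.asIdeal • (⊤ : Submodule R G) = ⊤

open TensorProduct in
theorem main_step {R : Type u} [CommRing R] [IsNoetherianRing R] (i : ℕ)
    (G : Type u) [AddCommGroup G] [Module R G] [Module.Flat R G] (hZ : ZProp R i G) :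
    ∃ (C : Type u) (_ : AddCommGroup C) (_ : Module R C) (θ : G →ₗ[R] C),
      ExtProp R C ∧ Function.Injective θ ∧ Module.Flat R (C ⧸ LinearMap.range θ) ∧
      ZProp R (i + 1) (C ⧸ LinearMap.range θ) := by
  choose E i1 i2 x0 hE hx0 hess using fun p : PrimeSpectrum R => exists_hull p.asIdeal
  have hJ := fun p => injective_tensor (R := R) G (E p)
  let ι := {p : PrimeSpectrum R // i ≤ Order.coheight p}
  let C := ∀ p : ι, (E p.1 →ₗ[R] G ⊗[R] E p.1)
  let θ : G →ₗ[R] C := LinearMap.pi fun p => TensorProduct.mk R G (E p.1)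
  have hCflat : Module.Flat R C := by
    apply flat_of_eqProp
    intro l k a κ h
    exact eqProp_pi _ fun p => eqProp_hom h _ _
  have hCext : ExtProp R C := extProp_pi _ fun p => extProp_hom _ _
  have hpure : ∀ q : Ideal R, q.IsPrime → ∀ g, θ g ∈ q • (⊤ : Submodule R C) →
      g ∈ q • (⊤ : Submodule R G) := by
    intro q hq g hg
    let q' : PrimeSpectrum R := ⟨q, hq⟩
    by_cases hi : i ≤ Order.coheight q'
    · have h1 : ∀ c ∈ q • (⊤ : Submodule R C), c ⟨q', hi⟩ (x0 q') = 0 := by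
        intro c hc
        induction hc using Submodule.smul_induction_on' with
        | smul s hs n hn =>
          rw [Pi.smul_apply, LinearMap.smul_apply, ← map_smul, (hx0 q' s).2 hs, map_zero]
        | add x _ y _ hx hy => rw [Pi.add_apply, LinearMap.add_apply, hx, hy, add_zero]
      have h2 : g ⊗ₜ[R] (x0 q') = 0 := h1 _ hg
      let j : (R ⧸ q) →ₗ[R] E q' := Submodule.liftQ q (LinearMap.toSpanSingleton R _ (x0 q'))
        (fun r hr => by simpa using (hx0 q' r).2 hr)
      have hj : Function.Injective j := by
        apply LinearMap.ker_eq_bot.1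
        apply Submodule.ker_liftQ_eq_bot
        intro r hr
        exact (hx0 q' r).1 (by simpa using hr)
      have hj2 := Module.Flat.lTensor_preserves_injective_linearMap (M := G) _ hj
      have h3 : g ⊗ₜ[R] (Ideal.Quotient.mk q 1) = 0 := by
        apply hj2
        rw [map_zero, LinearMap.lTensor_tmul]
        have : j (Ideal.Quotient.mk q 1) = x0 q' := by
          exact (Submodule.liftQ_apply q _ (1 : R)).trans (one_smul _ _)
        rw [this, h2]
      have h4 := congrArg (TensorProduct.tensorQuotEquivQuotSMul G q) h3
      rw [map_zero, TensorProduct.tensorQuotEquivQuotSMul_tmul_mk,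
        Submodule.Quotient.mk_eq_zero, one_smul] at h4
      exact h4
    · rw [hZ q' (not_le.1 hi)]; trivial
  obtain ⟨hinj, hflat⟩ := flat_quot G C θ hpure
  refine ⟨C, inferInstance, inferInstance, θ, hCext, hinj, hflat, ?_⟩
  intro q hq
  obtain ⟨l, a, ha⟩ := Submodule.fg_iff_exists_fin_generating_family.1
    (IsNoetherian.noetherian q.asIdeal)
  have hmem : ∀ i, a i ∈ q.asIdeal := fun i => ha ▸ Submodule.subset_span ⟨i, rfl⟩
  have hqi : Order.coheight q ≤ i := by
    have : Order.coheight q < (i : ℕ∞) + 1 := by exact_mod_cast hq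
    exact Order.le_of_lt_add_one this
  have hlt : Order.coheight q < ⊤ := lt_of_le_of_lt hqi (ENat.natCast_lt_top i)
  have hstrict : ∀ p : PrimeSpectrum R, q < p → Order.coheight p < i := by
    intro p hp
    refine lt_of_lt_of_le (Order.coheight_strictAnti hp ?_) hqi
    exact lt_of_le_of_lt (Order.coheight_anti hp.le) hlt
  -- other components have no q-torsion
  have hother : ∀ p : ι, p.1 ≠ q → ∀ y : E p.1, (∀ i, a i • y = 0) → y = 0 := by
    intro p hp y hy
    by_contra h0
    have hnle : ¬ q ≤ p.1 := fun hle =>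
      absurd p.2 (not_le.2 (hstrict p.1 (lt_of_le_of_ne hle (Ne.symm hp))))
    have : ∃ j, a j ∉ p.1.asIdeal := by
      by_contra! hcon
      apply hnle
      rw [← PrimeSpectrum.asIdeal_le_asIdeal, ← ha]
      rw [Submodule.span_le]
      rintro _ ⟨j, rfl⟩
      exact hcon j
    obtain ⟨j, hj⟩ := this
    obtain ⟨s, t, h1, h2⟩ := hess p.1 y h0
    have ht : t ∉ p.1.asIdeal := fun ht => h2 (by rw [h1, hx0]; exact ht)
    have h3 : (a j * t) • x0 p.1 = 0 := by
      rw [mul_smul, ← h1, smul_comm, hy, smul_zero]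
    rcases p.1.isPrime.mem_or_mem ((hx0 _ _).1 h3) with h | h
    · exact hj h
    · exact ht h
  have hdiv : ∀ r ∉ q.asIdeal, ∀ g' : G, ∃ g : G,
      g' - r • g ∈ q.asIdeal • (⊤ : Submodule R G) := by
    intro r hr g'
    have h1 : (q.asIdeal ⊔ Ideal.span {r}) • (⊤ : Submodule R G) = ⊤ := by
      apply smul_top_of_primes
      intro p hp hle
      refine hZ ⟨p, hp⟩ (hstrict _ ?_)
      refine lt_of_le_of_ne (le_sup_left.trans hle) ?_
      intro he
      apply hr
      have : q.asIdeal = p := congrArg PrimeSpectrum.asIdeal he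
      rw [this]
      exact hle (Ideal.mem_sup_right (Ideal.mem_span_singleton_self r))
    rw [Submodule.sup_smul, Submodule.ideal_span_singleton_smul] at h1
    have h2 : g' ∈ (⊤ : Submodule R G) := trivial
    rw [← h1] at h2
    obtain ⟨y, hy, z, hz, rfl⟩ := Submodule.mem_sup.1 h2
    obtain ⟨g, -, rfl⟩ := Submodule.mem_smul_pointwise_iff_exists _ _ _ |>.1 hz
    exact ⟨g, by simpa using hy⟩
  have key : ∀ c : C, ∃ g : G, c - θ g ∈ q.asIdeal • (⊤ : Submodule R C) := by
    intro c
    have h1 : ∃ g : G, ∀ p : ι, ∀ y : E p.1, (∀ i, a i • y = 0) → c p y = g ⊗ₜ y := by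
      by_cases hi : i ≤ Order.coheight q
      · obtain ⟨g, hg⟩ := find_g a q.asIdeal q.isPrime ha G (E q) (x0 q) (hx0 q) (hess q) hdiv
          (c ⟨q, hi⟩)
        refine ⟨g, fun p y hy => ?_⟩
        by_cases hp : p.1 = q
        · obtain ⟨p, hp'⟩ := p
          subst hp
          exact hg y hy
        · rw [hother p hp y hy]; simp
      · refine ⟨0, fun p y hy => ?_⟩
        rw [hother p (fun h => hi (h ▸ p.2)) y hy]; simp
    obtain ⟨g, hg⟩ := h1
    refine ⟨g, ?_⟩
    choose k hk using fun p : ι => hom_mem_of_vanish a (E p.1) (G ⊗[R] E p.1) ((c - θ g) p) (by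
      intro y hy
      have : (c - θ g) p y = c p y - g ⊗ₜ y := rfl
      rw [this, hg p y hy, sub_self])
    have : c - θ g = ∑ j, a j • (fun p => k p j : C) := by
      ext p : 1
      rw [hk p]
      simp
    rw [this]
    exact Submodule.sum_mem _ fun j _ => Submodule.smul_mem_smul (hmem j) trivial
  rw [eq_top_iff]
  intro z _
  obtain ⟨c, rfl⟩ := Submodule.Quotient.mk_surjective _ z
  obtain ⟨g, hg⟩ := key c
  have h5 := Submodule.mem_map_of_mem (f := (LinearMap.range θ).mkQ) hg
  rw [Submodule.map_smul'', map_sub] at h5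
  have h6 : (LinearMap.range θ).mkQ (θ g) = 0 := by simp
  rw [h6, sub_zero] at h5
  exact Submodule.smul_mono le_rfl le_top h5
/-- recursive cotorsion dimension bound -/
def CD (R : Type u) [CommRing R] : ℕ → ∀ (G : Type u) [AddCommGroup G] [Module R G], Prop
  | 0, G, _, _ => ExtProp R G
  | j + 1, G, _, _ => ∃ (C : Type u) (_ : AddCommGroup C) (_ : Module R C) (θ : G →ₗ[R] C),
      ExtProp R C ∧ Function.Injective θ ∧ CD R j (C ⧸ LinearMap.range θ)

theorem ExtProp.of_equiv {R : Type u} [CommRing R] {C D : Type u} [AddCommGroup C] [Module R C]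
    [AddCommGroup D] [Module R D] (e : C ≃ₗ[R] D) (h : ExtProp R D) : ExtProp R C := by
  intro P _ _ K hK φ
  obtain ⟨ψ, hψ⟩ := h P K hK (e.toLinearMap.comp φ)
  exact ⟨e.symm.toLinearMap.comp ψ, fun x => by simp [hψ]⟩

/-- first syzygy: kernel of the free cover -/
noncomputable abbrev Cov (R : Type u) [CommRing R] (F : Type u) [AddCommGroup F] [Module R F] :
    (F →₀ R) →ₗ[R] F := Finsupp.linearCombination R (id : F → F)

theorem cov_surj (R : Type u) [CommRing R] (F : Type u) [AddCommGroup F] [Module R F] :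
    Function.Surjective (Cov R F) := fun x => ⟨Finsupp.single x 1, by simp [Cov]⟩

abbrev Syz (R : Type u) [CommRing R] (F : Type u) [AddCommGroup F] [Module R F] : Type u :=
  LinearMap.ker (Cov R F)

/-- `Ext^{j+1}(F, G) = 0`, recursively in terms of free covers -/
def EV (R : Type u) [CommRing R] (G : Type u) [AddCommGroup G] [Module R G] :
    ℕ → ∀ (F : Type u) [AddCommGroup F] [Module R F], Prop
  | 0, F, _, _ => ∀ φ : Syz R F →ₗ[R] G, ∃ ψ : (F →₀ R) →ₗ[R] G, ∀ x : Syz R F, ψ x = φ x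
  | j + 1, F, _, _ => EV R G j (Syz R F)

theorem flat_syz (R : Type u) [CommRing R] (F : Type u) [AddCommGroup F] [Module R F]
    (hF : Module.Flat R F) : Module.Flat R (Syz R F) := by
  refine (Module.Flat.iff_rTensor_injective' (R := R) (M := Syz R F)).2 fun I => ?_
  have h1 : Function.Injective ((LinearMap.ker (Cov R F)).subtype.lTensor I) :=
    LinearMap.lTensor_injective_of_exact_of_flat (R := R) (Cov R F) (cov_surj R F) _
      (Submodule.subtype_injective _) (LinearMap.exact_subtype_ker_map _) I
  have h2 : Function.Injective (I.subtype.rTensor (F →₀ R)) :=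
    Module.Flat.rTensor_preserves_injective_linearMap _ I.subtype_injective
  have h3 := h2.comp h1
  rw [← LinearMap.coe_comp, LinearMap.rTensor_comp_lTensor, ← LinearMap.lTensor_comp_rTensor,
    LinearMap.coe_comp] at h3
  exact h3.of_comp

theorem flat_quot_syz (R : Type u) [CommRing R] (F : Type u) [AddCommGroup F] [Module R F]
    (hF : Module.Flat R F) : Module.Flat R ((F →₀ R) ⧸ LinearMap.ker (Cov R F)) :=
  Module.Flat.of_linearEquiv ((Cov R F).quotKerEquivOfSurjective (cov_surj R F))

theorem exists_factor {R : Type u} [CommRing R] {P F D : Type u} [AddCommGroup P] [Module R P]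
    [AddCommGroup F] [Module R F] [AddCommGroup D] [Module R D] (π : P →ₗ[R] F)
    (hπ : Function.Surjective π) (ψ : P →ₗ[R] D) (hle : LinearMap.ker π ≤ LinearMap.ker ψ) :
    ∃ χ : F →ₗ[R] D, ∀ x, χ (π x) = ψ x := by
  let e := π.quotKerEquivOfSurjective hπ
  refine ⟨(Submodule.liftQ _ _ hle).comp e.symm.toLinearMap, fun x => ?_⟩
  have : e.symm (π x) = Submodule.Quotient.mk x := by
    rw [LinearEquiv.symm_apply_eq]; rfl
  simp only [LinearMap.comp_apply, LinearEquiv.coe_coe, this]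
  rfl

/-- dimension shift, abstract form -/
theorem shift_aux {R : Type u} [CommRing R] {G C P K Q : Type u} [AddCommGroup G] [Module R G]
    [AddCommGroup C] [Module R C] [AddCommGroup P] [Module R P] [AddCommGroup K] [Module R K]
    [AddCommGroup Q] [Module R Q] [Module.Projective R P]
    (θ : G →ₗ[R] C) (hθ : Function.Injective θ)
    (ι : K →ₗ[R] P) (π : Q →ₗ[R] K) (hπ : Function.Surjective π)
    (h : ∀ χ : K →ₗ[R] C ⧸ LinearMap.range θ, ∃ χ' : P →ₗ[R] C ⧸ LinearMap.range θ,
      ∀ x, χ' (ι x) = χ x)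
    (φ : LinearMap.ker π →ₗ[R] G) (ψ : Q →ₗ[R] C)
    (hψ : ∀ x : LinearMap.ker π, ψ x = θ (φ x)) :
    ∃ ψ' : Q →ₗ[R] G, ∀ x : LinearMap.ker π, ψ' x = φ x := by
  have hker : LinearMap.ker π ≤ LinearMap.ker ((LinearMap.range θ).mkQ.comp ψ) := by
    intro x hx
    have := hψ ⟨x, hx⟩
    simp only [LinearMap.mem_ker, LinearMap.comp_apply] at this ⊢
    rw [this]
    simp
  obtain ⟨χ, hχ⟩ := exists_factor π hπ _ hker
  obtain ⟨χ', hχ'⟩ := h χ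
  obtain ⟨μ, hμ⟩ := Module.projective_lifting_property (LinearMap.range θ).mkQ χ'
    (LinearMap.range θ).mkQ_surjective
  have hδ : ∀ x, (ψ - μ.comp (ι.comp π)) x ∈ LinearMap.range θ := by
    intro x
    rw [← Submodule.ker_mkQ (LinearMap.range θ), LinearMap.mem_ker]
    have := LinearMap.congr_fun hμ (ι (π x))
    rw [hχ', hχ, LinearMap.comp_apply, LinearMap.comp_apply] at this
    rw [LinearMap.sub_apply, map_sub, LinearMap.comp_apply, LinearMap.comp_apply, this, sub_self]
  refine ⟨(LinearEquiv.ofInjective θ hθ).symm.toLinearMap.comp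
    ((ψ - μ.comp (ι.comp π)).codRestrict _ hδ), fun x => ?_⟩
  simp only [LinearMap.comp_apply, LinearEquiv.coe_coe]
  rw [LinearEquiv.symm_apply_eq]
  ext
  have hx0 : π x = 0 := x.2
  simp [hx0, hψ x]

theorem ev_shift {R : Type u} [CommRing R] {G C : Type u} [AddCommGroup G] [Module R G]
    [AddCommGroup C] [Module R C] (θ : G →ₗ[R] C) (hθ : Function.Injective θ)
    (hC : ExtProp R C) (j : ℕ) : ∀ (F : Type u) [AddCommGroup F] [Module R F],
    Module.Flat R F → EV R (C ⧸ LinearMap.range θ) j F → EV R G (j + 1) F := by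
  induction j with
  | succ j ih =>
    intro F _ _ hF h
    exact ih (Syz R F) (flat_syz R F hF) h
  | zero =>
    intro F _ _ hF h
    change ∀ φ : LinearMap.ker (Cov R (Syz R F)) →ₗ[R] G,
      ∃ ψ : (Syz R F →₀ R) →ₗ[R] G, ∀ x : LinearMap.ker (Cov R (Syz R F)), ψ x = φ x
    intro φ
    obtain ⟨ψ, hψ⟩ := hC _ (LinearMap.ker (Cov R (Syz R F)))
      (flat_quot_syz R _ (flat_syz R F hF)) (θ.comp φ)
    have h' : ∀ χ : Syz R F →ₗ[R] C ⧸ LinearMap.range θ,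
        ∃ χ' : (F →₀ R) →ₗ[R] C ⧸ LinearMap.range θ,
        ∀ x : Syz R F, χ' ((LinearMap.ker (Cov R F)).subtype x) = χ x := h
    exact shift_aux (P := F →₀ R) (K := Syz R F) (Q := Syz R F →₀ R) θ hθ
      (LinearMap.ker (Cov R F)).subtype (Cov R (Syz R F))
      (cov_surj R (Syz R F)) h' φ ψ hψ

theorem ev_of_cd {R : Type u} [CommRing R] (j : ℕ) : ∀ (G : Type u) [AddCommGroup G] [Module R G],
    CD R j G → ∀ (F : Type u) [AddCommGroup F] [Module R F], Module.Flat R F → EV R G j F := by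
  induction j with
  | zero =>
    intro G _ _ h F _ _ hF φ
    exact h _ _ (flat_quot_syz R F hF) φ
  | succ j ih =>
    rintro G _ _ ⟨C, _, _, θ, h1, h2, h3⟩ F _ _ hF
    exact ev_shift θ h2 h1 j F hF (ih _ h3 F hF)

theorem projective_of_ev {R : Type u} [CommRing R] (F : Type u) [AddCommGroup F] [Module R F]
    (h : EV R (Syz R F) 0 F) : Module.Projective R F := by
  obtain ⟨ψ, hψ⟩ := h LinearMap.id
  have hle : LinearMap.ker (Cov R F) ≤
      LinearMap.ker (LinearMap.id - (LinearMap.ker (Cov R F)).subtype.comp ψ) := by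
    intro x hx
    have := hψ ⟨x, hx⟩
    simp only [LinearMap.mem_ker, LinearMap.sub_apply, LinearMap.id_apply, LinearMap.comp_apply] at this ⊢
    rw [this]; simp
  obtain ⟨s, hs⟩ := exists_factor (Cov R F) (cov_surj R F) _ hle
  refine Module.Projective.of_split s (Cov R F) ?_
  refine LinearMap.ext fun y => ?_
  obtain ⟨x, rfl⟩ := cov_surj R F y
  rw [LinearMap.comp_apply, hs]
  change Cov R F (x - (ψ x : F →₀ R)) = Cov R F x
  rw [map_sub, (ψ x).2, sub_zero]

/-- base of the projective resolution -/
theorem projRes_zero {R : Type u} [CommRing R] (F : Type u) [AddCommGroup F] [Module R F]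
    (h : Module.Projective R F) : Nonempty (FiniteProjectiveResolution R F 0) :=
  ⟨{ P := fun i => Nat.casesOn i F fun _ => PUnit.{u + 1}
     acg := fun i => by cases i <;> dsimp only <;> infer_instance
     mod := fun i => by cases i <;> dsimp only <;> infer_instance
     π := LinearMap.id
     d := fun i => 0
     hπ := Function.surjective_id
     hd0 := by simp
     hd := fun i => by
      ext x; exact ⟨fun _ => ⟨0, Subsingleton.elim (α := PUnit) _ _⟩, fun _ => rfl⟩
     hproj := fun i => by cases i <;> dsimp only <;> infer_instance
     htail := fun i hi => by
      cases i with
      | zero => omega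
      | succ i => exact inferInstanceAs (Subsingleton PUnit) }⟩

theorem projRes_succ {R : Type u} [CommRing R] (F P : Type u) [AddCommGroup F] [Module R F]
    [AddCommGroup P] [Module R P] (hP : Module.Projective R P) (π : P →ₗ[R] F)
    (hπ : Function.Surjective π) (n : ℕ)
    (h : Nonempty (FiniteProjectiveResolution R (LinearMap.ker π) n)) :
    Nonempty (FiniteProjectiveResolution R F (n + 1)) := by
  obtain ⟨X⟩ := h
  let _ := X.acg
  let _ := X.mod
  have := X.hproj
  exact ⟨{ P := fun i => Nat.casesOn i P fun i => X.P i
           acg := fun i => by cases i <;> dsimp only <;> infer_instance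
           mod := fun i => by cases i <;> dsimp only <;> infer_instance
           π := π
           d := fun i => match i with
            | 0 => (LinearMap.ker π).subtype.comp X.π
            | i + 1 => X.d i
           hπ := hπ
           hd0 := by
            change _ = LinearMap.range ((LinearMap.ker π).subtype.comp X.π)
            rw [LinearMap.range_comp, LinearMap.range_eq_top.2 X.hπ, Submodule.map_top,
              Submodule.range_subtype]
           hd := fun i => match i with
            | 0 => by
              change LinearMap.ker ((LinearMap.ker π).subtype.comp X.π) = LinearMap.range (X.d 0)
              rw [LinearMap.ker_comp, Submodule.ker_subtype, ← X.hd0]; rfl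
            | i + 1 => X.hd i
           hproj := fun i => by cases i <;> dsimp only <;> infer_instance
           htail := fun i hi => by
            cases i with
            | zero => omega
            | succ i => exact X.htail i (by omega) }⟩

theorem projRes_of_ev {R : Type u} [CommRing R] (n : ℕ) :
    ∀ (F : Type u) [AddCommGroup F] [Module R F], Module.Flat R F →
      (∀ (G : Type u) [AddCommGroup G] [Module R G], Module.Flat R G → EV R G n F) →
      Nonempty (FiniteProjectiveResolution R F n) := by
  induction n with
  | zero =>
    intro F _ _ hF h
    exact projRes_zero F (projective_of_ev F (h _ (flat_syz R F hF)))
  | succ n ih =>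
    intro F _ _ hF h
    exact projRes_succ F (F →₀ R) inferInstance (Cov R F) (cov_surj R F) n
      (ih _ (flat_syz R F hF) fun G _ _ hG => h G hG)

theorem ext_aux {R : Type u} [CommRing R] {C F P0 P1 P2 : Type u} [AddCommGroup C] [Module R C]
    [AddCommGroup F] [Module R F] [AddCommGroup P0] [Module R P0] [AddCommGroup P1] [Module R P1]
    [AddCommGroup P2] [Module R P2] (h : ExtProp R C) (hF : Module.Flat R F)
    (π : P0 →ₗ[R] F) (hπ : Function.Surjective π) (d0 : P1 →ₗ[R] P0) (d1 : P2 →ₗ[R] P1)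
    (e00 : ∀ x, π (d0 x) = 0)
    (e0 : ∀ x, π x = 0 → ∃ y, d0 y = x) (e1 : ∀ x, d0 x = 0 → ∃ y, d1 y = x)
    (φ : P1 →ₗ[R] C) (hφ : ∀ x, φ (d1 x) = 0) : ∃ ψ : P0 →ₗ[R] C, ∀ x, ψ (d0 x) = φ x := by
  let δ : P1 →ₗ[R] LinearMap.ker π := d0.codRestrict _ e00
  have hδ : Function.Surjective δ := by
    rintro ⟨x, hx⟩
    obtain ⟨y, hy⟩ := e0 x hx
    exact ⟨y, Subtype.ext hy⟩
  obtain ⟨χ, hχ⟩ := exists_factor δ hδ φ (by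
    intro x hx
    obtain ⟨y, rfl⟩ := e1 x (congrArg Subtype.val hx)
    exact hφ y)
  have hfl : Module.Flat R (P0 ⧸ LinearMap.ker π) :=
    Module.Flat.of_linearEquiv (π.quotKerEquivOfSurjective hπ)
  obtain ⟨ψ, hψ⟩ := h P0 (LinearMap.ker π) hfl χ
  exact ⟨ψ, fun x => (hψ (δ x)).trans (hχ x)⟩

theorem isCotorsion_of_extProp {R : Type u} [CommRing R] (C : Type u) [AddCommGroup C]
    [Module R C] (h : ExtProp R C) : IsCotorsion R C := by
  intro F _ _ hF
  let P := projectiveResolution (ModuleCat.of R F)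
  refine ModuleCat.subsingleton_of_isZero (Limits.IsZero.of_iso ?_ (P.isoExt 1 (ModuleCat.of R C)))
  rw [← HomologicalComplex.exactAt_iff_isZero_homology,
    HomologicalComplex.exactAt_iff' _ 0 1 2 (by simp) (by simp), ShortComplex.moduleCat_exact_iff]
  intro (φ : P.complex.X 1 ⟶ ModuleCat.of R C) hφ
  replace hφ : P.complex.d 2 1 ≫ φ = 0 := hφ
  suffices ∃ ψ : P.complex.X 0 ⟶ ModuleCat.of R C, P.complex.d 1 0 ≫ ψ = φ from this
  have e1 := P.complex_exactAt_succ 0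
  rw [HomologicalComplex.exactAt_iff' _ 2 1 0 (by simp) (by simp),
    ShortComplex.moduleCat_exact_iff] at e1
  have e0 := P.exact₀
  rw [ShortComplex.moduleCat_exact_iff] at e0
  have hs : Function.Surjective (P.π.f 0).hom :=
    (ModuleCat.epi_iff_surjective (P.π.f 0)).1 inferInstance
  obtain ⟨ψ, hψ⟩ := ext_aux h hF (P.π.f 0).hom hs (P.complex.d 1 0).hom (P.complex.d 2 1).hom
    (fun x => ConcreteCategory.congr_hom P.complex_d_comp_π_f_zero x) e0 e1 φ.hom
    (fun x => ConcreteCategory.congr_hom hφ x)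
  exact ⟨ModuleCat.ofHom ψ, ModuleCat.hom_ext (LinearMap.ext hψ)⟩

theorem isCotorsion_punit {R : Type u} [CommRing R] : IsCotorsion R PUnit.{u + 1} :=
  isCotorsion_of_extProp _ fun _ _ _ _ _ _ => ⟨0, fun _ => Subsingleton.elim _ _⟩

/-- prepend an object to a sequence of modules -/
def consM {R : Type u} [CommRing R] (M : ModuleCat.{u} R) (X : ℕ → ModuleCat.{u} R) :
    ℕ → ModuleCat.{u} R
  | 0 => M
  | i + 1 => X i

theorem cotRes_cons {R : Type u} [CommRing R] (F : Type u) [AddCommGroup F] [Module R F] (n : ℕ)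
    (M : ModuleCat.{u} R) (X : ℕ → ModuleCat.{u} R) (f : F →ₗ[R] M) (g : M →ₗ[R] X 0)
    (d : ∀ i, X i →ₗ[R] X (i + 1)) (hf : Function.Injective f)
    (hg : LinearMap.ker g = LinearMap.range f) (hd0 : LinearMap.ker (d 0) = LinearMap.range g)
    (hd : ∀ i, LinearMap.ker (d (i + 1)) = LinearMap.range (d i))
    (hM : IsCotorsion R M) (hX : ∀ i, IsCotorsion R (X i))
    (htail : ∀ i, n ≤ i → Subsingleton (X i)) : cotorsionDimLE R F n :=
  ⟨{ C := fun i => consM M X i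
     f := f
     d := fun i => match i with
      | 0 => g
      | i + 1 => d i
     hf := hf
     hd0 := hg
     hd := fun i => match i with
      | 0 => hd0
      | i + 1 => hd i
     hcot := fun i => match i with
      | 0 => hM
      | i + 1 => hX i
     htail := fun i hi => by
      cases i with
      | zero => omega
      | succ i => exact htail i (by omega) }⟩

theorem cotRes_of_cd {R : Type u} [CommRing R] (n : ℕ) :
    ∀ (F : Type u) [AddCommGroup F] [Module R F], CD R n F → cotorsionDimLE R F n := by
  induction n with
  | zero =>
    intro F _ _ h
    refine cotRes_cons F 0 (ModuleCat.of R F) (fun _ => ModuleCat.of R PUnit.{u + 1})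
      LinearMap.id 0 (fun _ => 0) Function.injective_id ?_ ?_ ?_ (isCotorsion_of_extProp F h)
      (fun _ => isCotorsion_punit) (fun _ _ => inferInstanceAs (Subsingleton PUnit))
    · rw [LinearMap.range_id, LinearMap.ker_zero]
    · ext x
      exact ⟨fun _ => ⟨0, Subsingleton.elim (α := PUnit) _ _⟩, fun _ => rfl⟩
    · intro i
      ext x
      exact ⟨fun _ => ⟨0, Subsingleton.elim (α := PUnit) _ _⟩, fun _ => rfl⟩
  | succ n ih =>
    rintro F _ _ ⟨C, _, _, θ, h1, h2, h3⟩
    obtain ⟨X⟩ := ih _ h3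
    let _ := X.acg
    let _ := X.mod
    refine cotRes_cons F (n + 1) (ModuleCat.of R C) (fun i => ModuleCat.of R (X.C i))
      θ (X.f.comp (LinearMap.range θ).mkQ) X.d h2 ?_ ?_ X.hd (isCotorsion_of_extProp C h1)
      X.hcot (fun i hi => X.htail i (by omega))
    · rw [LinearMap.ker_comp, LinearMap.ker_eq_bot.2 X.hf, Submodule.comap_bot,
        Submodule.ker_mkQ]
    · rw [LinearMap.range_comp, Submodule.range_mkQ, Submodule.map_top]
      exact X.hd0

theorem cd_of_flat {R : Type u} [CommRing R] [IsNoetherianRing R] (n : ℕ)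
    (hdim : ringKrullDim R = n) (j : ℕ) : ∀ (i : ℕ), i + j = n →
    ∀ (G : Type u) [AddCommGroup G] [Module R G], Module.Flat R G → ZProp R i G → CD R j G := by
  induction j with
  | zero =>
    intro i hi G _ _ hG hZ
    obtain ⟨C, _, _, θ, h1, h2, h3, h4⟩ := main_step i G hZ
    have h5 : (⊥ : Ideal R) • (⊤ : Submodule R (C ⧸ LinearMap.range θ)) = ⊤ := by
      apply smul_top_of_primes
      intro q hq _
      refine h4 ⟨q, hq⟩ ?_
      have := Order.coheight_le_krullDim (⟨q, hq⟩ : PrimeSpectrum R)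
      rw [← ringKrullDim, hdim] at this
      have h6 : Order.coheight (⟨q, hq⟩ : PrimeSpectrum R) ≤ (n : ℕ∞) := by exact_mod_cast this
      have h7 : i = n := by omega
      subst h7
      refine lt_of_le_of_lt h6 ?_
      exact_mod_cast Nat.lt_succ_self i
    rw [Submodule.bot_smul] at h5
    have h8 : Function.Surjective θ := by
      intro c
      have : (LinearMap.range θ).mkQ c ∈ (⊤ : Submodule R (C ⧸ LinearMap.range θ)) := trivial
      rw [← h5, Submodule.mem_bot] at this
      simpa using this
    exact ExtProp.of_equiv (LinearEquiv.ofBijective θ ⟨h2, h8⟩) h1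
  | succ j ih =>
    intro i hi G _ _ hG hZ
    obtain ⟨C, _, _, θ, h1, h2, h3, h4⟩ := main_step i G hZ
    exact ⟨C, _, _, θ, h1, h2, ih (i + 1) (by omega) _ h3 h4⟩

/-- over a noetherian ring of Krull dimension `n`, every flat module has
projective dimension at most `n` and hence cotorsion dimension at most `n`. -/
theorem flat_projDim_and_cotorsionDim_le_of_noetherian (R : Type u) [CommRing R]
    [IsNoetherianRing R] (n : ℕ) (hdim : ringKrullDim R = n) :
    ∀ (F : Type u) [AddCommGroup F] [Module R F], Module.Flat R F →
      Nonempty (FiniteProjectiveResolution R F n) ∧ cotorsionDimLE R F n := by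
  intro F _ _ hF
  have hcd : ∀ (G : Type u) [AddCommGroup G] [Module R G], Module.Flat R G → CD R n G :=
    fun G _ _ hG => cd_of_flat n hdim n 0 (by omega) G hG (fun q hq => by simp at hq)
  exact ⟨projRes_of_ev n F hF fun G _ _ hG => ev_of_cd n G (hcd G hG) F hF,
    cotRes_of_cd n F (hcd F hF)⟩
end

section
/- Let R be a commutative ring such that every flat R-module has cotorsion dimension at most n. Then every flat R[x]-module has cotorsion dimension at most n+1. -/
open CategoryTheory

universe u

namespace CotAux

/-- Vanishing of the derived-category `Ext`. -/
def V (R : Type u) [CommRing R] (n : ℕ) (M N : Type u) [AddCommGroup M] [Module R M]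
    [AddCommGroup N] [Module R N] : Prop :=
  Subsingleton (Abelian.Ext (ModuleCat.of R M) (ModuleCat.of R N) n)

variable {R : Type u} [CommRing R]

theorem extVanish_one_iff (M N : Type u) [AddCommGroup M] [Module R M]
    [AddCommGroup N] [Module R N] : extVanish R 1 M N ↔ V R 1 M N := by
  let P := projectiveResolution (ModuleCat.of R M)
  trans ∀ f : P.complex.X 1 ⟶ ModuleCat.of R N, P.complex.d 2 1 ≫ f = 0 →
    ∃ g : P.complex.X 0 ⟶ ModuleCat.of R N, P.complex.d 1 0 ≫ g = f
  · have e := (P.isoExt (R := R) 1 (ModuleCat.of R N))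
    unfold extVanish
    rw [← ModuleCat.isZero_iff_subsingleton, e.isZero_iff,
      ← HomologicalComplex.exactAt_iff_isZero_homology,
      HomologicalComplex.exactAt_iff' _ 0 1 2 (by simp) (by simp),
      ShortComplex.moduleCat_exact_iff]
    rfl
  · unfold V
    constructor
    · intro h
      rw [subsingleton_iff_forall_eq 0]
      intro x
      obtain ⟨f, hf, rfl⟩ := P.extMk_surjective x 2 rfl
      rw [P.extMk_eq_zero_iff f 2 rfl hf 0 rfl]
      exact h f hf
    · intro h f hf
      rw [← P.extMk_eq_zero_iff f 2 rfl hf 0 rfl]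
      exact Subsingleton.elim _ _

theorem flat_ker {P F : Type u} [AddCommGroup P] [Module R P] [AddCommGroup F] [Module R F]
    [Module.Flat R P] [Module.Flat R F] (f : P →ₗ[R] F) (hf : Function.Surjective f) :
    Module.Flat R (LinearMap.ker f) := by
  rw [Module.Flat.iff_rTensor_preserves_injective_linearMap]
  intro N N' _ _ _ _ L hL
  have h1 := LinearMap.lTensor_injective_of_exact_of_flat f hf (LinearMap.ker f).subtype
    (Submodule.injective_subtype _) (LinearMap.exact_subtype_ker_map f) N
  have h2 := Module.Flat.rTensor_preserves_injective_linearMap (M := P) L hL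
  have h3 : Function.Injective
      ((LinearMap.lTensor N' (LinearMap.ker f).subtype) ∘ₗ (L.rTensor (LinearMap.ker f))) := by
    rw [LinearMap.lTensor_comp_rTensor, ← LinearMap.rTensor_comp_lTensor]
    exact h2.comp h1
  exact Function.Injective.of_comp (f := LinearMap.lTensor N' (LinearMap.ker f).subtype) (by
    simpa only [LinearMap.coe_comp] using h3)

/-- Free cover. -/
theorem exists_cover (F : Type u) [AddCommGroup F] [Module R F] :
    ∃ f : (F →₀ R) →ₗ[R] F, Function.Surjective f :=
  ⟨Finsupp.linearCombination R id, Finsupp.linearCombination_surjective R Function.surjective_id⟩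

instance projX2 {F : Type u} [AddCommGroup F] [Module R F] (f : (F →₀ R) →ₗ[R] F) :
    Projective f.shortComplexKer.X₂ :=
  ModuleCat.projective_of_free (R := R) (M := ModuleCat.of R (F →₀ R))
    (Finsupp.basisSingleOne (R := R) (ι := F))

theorem V_succ_of_ker {F N : Type u} [AddCommGroup F] [Module R F] [AddCommGroup N] [Module R N]
    (f : (F →₀ R) →ₗ[R] F) (hf : Function.Surjective f) (k : ℕ)
    (h : V R k (LinearMap.ker f) N) : V R (k + 1) F N := by
  have hS := LinearMap.shortExact_shortComplexKer hf
  unfold V at *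
  rw [subsingleton_iff_forall_eq 0]
  intro x
  obtain ⟨y, rfl⟩ := Abelian.Ext.contravariant_sequence_exact₃ hS _ x
    (Abelian.Ext.eq_zero_of_projective _) (add_comm 1 k)
  obtain rfl : y = 0 := Subsingleton.elim _ _
  simp

theorem V_ker_of_succ {F N : Type u} [AddCommGroup F] [Module R F] [AddCommGroup N] [Module R N]
    (f : (F →₀ R) →ₗ[R] F) (hf : Function.Surjective f) (k : ℕ)
    (h : V R (k + 2) F N) : V R (k + 1) (LinearMap.ker f) N := by
  have hS := LinearMap.shortExact_shortComplexKer hf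
  unfold V at *
  rw [subsingleton_iff_forall_eq 0]
  intro x
  obtain ⟨y, rfl⟩ := Abelian.Ext.contravariant_sequence_exact₁ hS _ x
    (show 1 + (k + 1) = k + 2 by omega) (Subsingleton.elim _ _)
  obtain rfl : y = 0 := Abelian.Ext.eq_zero_of_projective _
  simp

/-- Cotorsion modules are hereditary. -/
theorem cotorsion_V {C : Type u} [AddCommGroup C] [Module R C] (hC : IsCotorsion R C) (k : ℕ) :
    ∀ (F : Type u) [AddCommGroup F] [Module R F], Module.Flat R F → V R (k + 1) F C := by
  induction k with
  | zero => exact fun F _ _ hF => (extVanish_one_iff F C).1 (hC F hF)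
  | succ k ih =>
    intro F _ _ hF
    obtain ⟨f, hf⟩ := exists_cover (R := R) F
    exact V_succ_of_ker f hf _ (ih _ (flat_ker f hf))

theorem V_of_res (n : ℕ) : ∀ (M : Type u) [AddCommGroup M] [Module R M],
    cotorsionDimLE R M n → ∀ (F : Type u) [AddCommGroup F] [Module R F], Module.Flat R F →
      V R (n + 1) F M := by
  induction n with
  | zero =>
    intro M _ _ ⟨r⟩ F _ _ hF
    letI := r.acg
    letI := r.mod
    have hs : Function.Surjective r.f := by
      have := r.htail 1 (by omega)
      rw [← LinearMap.range_eq_top, ← r.hd0, LinearMap.ker_eq_top]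
      ext x
      exact Subsingleton.elim (α := r.C 1) _ _
    have e := LinearEquiv.ofBijective r.f ⟨r.hf, hs⟩
    have hV := cotorsion_V (r.hcot 0) 0 F hF
    unfold V at *
    exact @Equiv.subsingleton _ _ (((Abelian.extFunctorObj (ModuleCat.of R F) 1).mapIso
      e.toModuleIso).addCommGroupIsoToAddEquiv).toEquiv hV
  | succ n ih =>
    intro M _ _ ⟨r⟩ F _ _ hF
    letI := r.acg
    letI := r.mod
    let g := (r.d 0).rangeRestrict
    have hQ : cotorsionDimLE R (LinearMap.range (r.d 0)) n := ⟨
      { C := fun i => r.C (i + 1)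
        f := (LinearMap.range (r.d 0)).subtype
        d := fun i => r.d (i + 1)
        hf := Submodule.injective_subtype _
        hd0 := by rw [Submodule.range_subtype]; exact r.hd 0
        hd := fun i => r.hd (i + 1)
        hcot := fun i => r.hcot (i + 1)
        htail := fun i hi => r.htail (i + 1) (by omega) }⟩
    have h1 := ih _ hQ F hF
    have h2 := cotorsion_V (r.hcot 0) (n + 1) F hF
    have hex : Function.Exact r.f g := by
      rw [LinearMap.exact_iff, ← r.hd0, LinearMap.ker_rangeRestrict]
    let S := ModuleCat.shortComplexOfCompEqZero r.f g hex.linearMap_comp_eq_zero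
    have hS : S.ShortExact := ModuleCat.shortComplex_shortExact S hex r.hf
      (LinearMap.surjective_rangeRestrict _)
    unfold V at *
    rw [subsingleton_iff_forall_eq 0]
    intro x
    obtain ⟨y, hy⟩ := Abelian.Ext.covariant_sequence_exact₁ _ hS x
      (h2.elim _ _) (rfl : n + 1 + 1 = n + 1 + 1)
    obtain rfl : y = 0 := h1.elim _ _
    simpa using hy.symm

theorem pd_of_V (k : ℕ) : ∀ (F : Type u) [AddCommGroup F] [Module R F], Module.Flat R F →
    (∀ (N : Type u) [AddCommGroup N] [Module R N], Module.Flat R N → V R (k + 1) F N) →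
    HasProjectiveDimensionLT (ModuleCat.of R F) (k + 1) := by
  induction k with
  | zero =>
    intro F _ _ hF h
    obtain ⟨f, hf⟩ := exists_cover (R := R) F
    have hK := h (LinearMap.ker f) (flat_ker f hf)
    have hS := LinearMap.shortExact_shortComplexKer hf
    unfold V at hK
    -- the extension splits
    obtain ⟨s, hs⟩ := Abelian.Ext.covariant_sequence_exact₃ (ModuleCat.of R F) hS
      (Abelian.Ext.mk₀ (𝟙 _)) (rfl : 0 + 1 = 1) (hK.elim _ _)
    obtain ⟨s, rfl⟩ := (Abelian.Ext.mk₀_bijective _ _).2 s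
    rw [Abelian.Ext.mk₀_comp_mk₀] at hs
    have hs' := (Abelian.Ext.mk₀_bijective _ _).1 hs
    have : Projective (ModuleCat.of R F) :=
      (Retract.mk s f.shortComplexKer.g hs').projective
    infer_instance
  | succ k ih =>
    intro F _ _ hF h
    obtain ⟨f, hf⟩ := exists_cover (R := R) F
    have hS := LinearMap.shortExact_shortComplexKer hf
    exact (hS.hasProjectiveDimensionLT_X₃_iff k inferInstance).2
      (ih _ (flat_ker f hf) fun N _ _ hN => V_ker_of_succ f hf k (h N hN))

theorem res_of_V (m : ℕ) : ∀ (M : Type u) [AddCommGroup M] [Module R M],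
    (∀ (F : Type u) [AddCommGroup F] [Module R F], Module.Flat R F → V R (m + 1) F M) →
    cotorsionDimLE R M m := by
  have hz : IsCotorsion R PUnit.{u+1} := by
    intro F _ _ _
    rw [extVanish_one_iff]
    unfold V
    rw [subsingleton_iff_forall_eq 0]
    intro x
    have : Injective (ModuleCat.of R PUnit.{u+1}) :=
      (ModuleCat.isZero_of_subsingleton _).injective
    exact Abelian.Ext.eq_zero_of_injective _
  induction m with
  | zero =>
    intro M _ _ h
    let C : ℕ → ModuleCat.{u} R := fun i =>
      match i with
      | 0 => ModuleCat.of R M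
      | _ + 1 => ModuleCat.of R PUnit.{u+1}
    exact ⟨
      { C := fun i => C i
        f := (LinearMap.id : M →ₗ[R] M)
        d := fun i => 0
        hf := Function.injective_id
        hd0 := by
          rw [LinearMap.ker_zero]
          exact LinearMap.range_id.symm
        hd := fun i => by
          have : Subsingleton (C (i + 1)) := inferInstanceAs (Subsingleton PUnit)
          exact Subsingleton.elim _ _
        hcot := fun i => by
          cases i with
          | zero => exact fun F _ _ hF => (extVanish_one_iff F M).2 (h F hF)
          | succ i => exact hz
        htail := fun i hi => by
          cases i with
          | zero => omega
          | succ i => exact inferInstanceAs (Subsingleton PUnit) }⟩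
  | succ m ih =>
    intro M _ _ h
    obtain ⟨⟨I, hI, j, hj⟩⟩ := EnoughInjectives.presentation (ModuleCat.of R M)
    let jl : M →ₗ[R] I := j.hom
    have hjl : Function.Injective jl := (ModuleCat.mono_iff_injective j).1 hj
    let Q := I ⧸ LinearMap.range jl
    let q : I →ₗ[R] Q := (LinearMap.range jl).mkQ
    have hex : Function.Exact jl q := LinearMap.exact_map_mkQ_range jl
    let S := ModuleCat.shortComplexOfCompEqZero jl q hex.linearMap_comp_eq_zero
    have hS : S.ShortExact := ModuleCat.shortComplex_shortExact S hex hjl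
      (Submodule.mkQ_surjective _)
    have hI2 : Injective S.X₂ := hI
    obtain ⟨r⟩ := ih Q (by
      intro F _ _ hF
      have h2 := h F hF
      unfold V at *
      rw [subsingleton_iff_forall_eq 0]
      intro x
      obtain ⟨y, hy⟩ := Abelian.Ext.covariant_sequence_exact₃ _ hS x
        (rfl : m + 1 + 1 = m + 1 + 1) (h2.elim _ _)
      obtain rfl : y = 0 := Abelian.Ext.eq_zero_of_injective _
      simpa using hy.symm)
    letI := r.acg
    letI := r.mod
    let C : ℕ → ModuleCat.{u} R := fun i =>
      match i with
      | 0 => I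
      | i + 1 => ModuleCat.of R (r.C i)
    let d : ∀ i, C i →ₗ[R] C (i + 1) := fun i =>
      match i with
      | 0 => r.f ∘ₗ q
      | i + 1 => r.d i
    exact ⟨
      { C := fun i => C i
        f := jl
        d := d
        hf := hjl
        hd0 := by
          change LinearMap.ker (r.f ∘ₗ q) = _
          rw [LinearMap.ker_comp, LinearMap.ker_eq_bot.2 r.hf]
          exact (LinearMap.exact_iff.1 hex)
        hd := fun i => by
          cases i with
          | zero =>
            change LinearMap.ker (r.d 0) = LinearMap.range (r.f ∘ₗ q)
            rw [LinearMap.range_comp, LinearMap.range_eq_top.2 (Submodule.mkQ_surjective _),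
              r.hd0, Submodule.map_top]
          | succ i => exact r.hd i
        hcot := fun i => by
          cases i with
          | zero =>
            intro F _ _ hF
            refine (extVanish_one_iff F I).2 ?_
            unfold V
            rw [subsingleton_iff_forall_eq 0]
            intro x
            exact Abelian.Ext.eq_zero_of_injective (I := I) _
          | succ i => exact r.hcot i
        htail := fun i hi => by
          cases i with
          | zero => omega
          | succ i => exact r.htail i (by omega) }⟩

end CotAux

namespace CotAux
open TensorProduct Polynomial

theorem pd_baseChange {R A : Type u} [CommRing R] [CommRing A] [Algebra R A] [Module.Flat R A]
    (n : ℕ) : ∀ (M : Type u) [AddCommGroup M] [Module R M],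
    HasProjectiveDimensionLT (ModuleCat.of R M) (n + 1) →
    HasProjectiveDimensionLT (ModuleCat.of A (A ⊗[R] M)) (n + 1) := by
  induction n with
  | zero =>
    intro M _ _ h
    rw [zero_add, ← projective_iff_hasProjectiveDimensionLT_one,
      ← IsProjective.iff_projective] at h ⊢
    infer_instance
  | succ n ih =>
    intro M _ _ h
    obtain ⟨f, hf⟩ := exists_cover (R := R) M
    have hS := LinearMap.shortExact_shortComplexKer hf
    have h1 := (hS.hasProjectiveDimensionLT_X₃_iff n inferInstance).1 h
    have h2 := ih _ h1
    let a := (LinearMap.ker f).subtype.baseChange A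
    let b := f.baseChange A
    have hex : Function.Exact a b := by
      have h0 := _root_.lTensor_exact (M := LinearMap.ker f) A (LinearMap.exact_subtype_ker_map f) hf
      exact h0
    let T := ModuleCat.shortComplexOfCompEqZero a b hex.linearMap_comp_eq_zero
    have hT : T.ShortExact := ModuleCat.shortComplex_shortExact T hex
      (Module.Flat.lTensor_preserves_injective_linearMap (M := A) _
        (Submodule.injective_subtype _))
      (LinearMap.lTensor_surjective A hf)
    have : Projective T.X₂ := by
      rw [← IsProjective.iff_projective]
      exact inferInstanceAs (Module.Projective A (A ⊗[R] (M →₀ R)))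
    exact (hT.hasProjectiveDimensionLT_X₃_iff n this).2 h2

section poly
variable (R : Type u) [CommRing R] (G : Type u) [AddCommGroup G] [Module R G] [Module R[X] G]
  [IsScalarTower R R[X] G]

/-- Multiplication by `X` on `G` as an `R`-linear map. -/
noncomputable def xG : G →ₗ[R] G := (LinearMap.lsmul R[X] G X).restrictScalars R

@[simp] theorem xG_apply (g : G) : xG R G g = (X : R[X]) • g := rfl

/-- The map `X ⊗ 1 - 1 ⊗ X`. -/
noncomputable def delta : (R[X] ⊗[R] G) →ₗ[R[X]] (R[X] ⊗[R] G) :=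
  LinearMap.lsmul R[X] (R[X] ⊗[R] G) X - (xG R G).baseChange R[X]

/-- The multiplication map. -/
noncomputable def eps : (R[X] ⊗[R] G) →ₗ[R[X]] G :=
  LinearMap.liftBaseChange R[X] (LinearMap.id : G →ₗ[R] G)

/-- The contracting homotopy. -/
noncomputable def hh : (R[X] ⊗[R] G) →ₗ[R] (R[X] ⊗[R] G) :=
  TensorProduct.lift ((Polynomial.basisMonomials R).constr R (fun i =>
    ∑ j ∈ Finset.range i, (TensorProduct.mk R R[X] G (X ^ j)) ∘ₗ (xG R G) ^ (i - 1 - j)))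

theorem xG_pow (k : ℕ) (g : G) : ((xG R G) ^ k) g = (X ^ k : R[X]) • g := by
  induction k generalizing g with
  | zero => simp
  | succ k ih => rw [pow_succ, Module.End.mul_apply, ih, xG_apply, smul_smul, ← pow_succ]

theorem hh_tmul (i : ℕ) (g : G) : hh R G ((X ^ i : R[X]) ⊗ₜ g) =
    ∑ j ∈ Finset.range i, (X ^ j : R[X]) ⊗ₜ[R] ((X ^ (i - 1 - j) : R[X]) • g) := by
  have : (X ^ i : R[X]) = Polynomial.basisMonomials R i := by
    simp [Polynomial.X_pow_eq_monomial]
  rw [hh, TensorProduct.lift.tmul, this, Module.Basis.constr_basis]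
  simp [xG_pow, LinearMap.sum_apply]

theorem delta_tmul (i : ℕ) (g : G) : delta R G ((X ^ i : R[X]) ⊗ₜ g) =
    (X ^ (i + 1) : R[X]) ⊗ₜ[R] g - (X ^ i : R[X]) ⊗ₜ[R] ((X : R[X]) • g) := by
  simp [delta, TensorProduct.smul_tmul', pow_succ']

theorem ext_aux {N : Type*} [AddCommGroup N] [Module R N] (a b : (R[X] ⊗[R] G) →ₗ[R] N)
    (h : ∀ (i : ℕ) (g : G), a ((X ^ i : R[X]) ⊗ₜ g) = b ((X ^ i : R[X]) ⊗ₜ g)) : a = b := by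
  refine TensorProduct.ext ?_
  refine (Polynomial.basisMonomials R).ext fun i => ?_
  ext g
  simpa [Polynomial.X_pow_eq_monomial] using h i g

theorem hh_delta (p : R[X] ⊗[R] G) : hh R G (delta R G p) = p := by
  have : hh R G ∘ₗ (delta R G).restrictScalars R = LinearMap.id := by
    apply ext_aux
    intro i g
    simp only [LinearMap.comp_apply, LinearMap.restrictScalars_apply, delta_tmul, map_sub,
      hh_tmul, LinearMap.id_apply]
    rw [Finset.sum_range_succ, sub_eq_iff_eq_add, add_comm]
    congr 1
    · simp
    · refine Finset.sum_congr rfl fun j hj => ?_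
      have := Finset.mem_range.1 hj
      rw [smul_smul, ← pow_succ]
      congr 3
      omega
  exact LinearMap.congr_fun this p

theorem delta_hh (p : R[X] ⊗[R] G) : delta R G (hh R G p) = p - 1 ⊗ₜ eps R G p := by
  have : (delta R G).restrictScalars R ∘ₗ hh R G = LinearMap.id -
      (TensorProduct.mk R R[X] G 1) ∘ₗ (eps R G).restrictScalars R := by
    apply ext_aux
    intro i g
    simp only [LinearMap.comp_apply, LinearMap.restrictScalars_apply, hh_tmul, map_sum,
      delta_tmul, LinearMap.sub_apply, LinearMap.id_apply, eps, TensorProduct.mk_apply,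
      LinearMap.liftBaseChange_tmul]
    have h := Finset.sum_range_sub
      (fun j => (X ^ j : R[X]) ⊗ₜ[R] ((X ^ (i - j) : R[X]) • g)) i
    simp only [Nat.sub_self, pow_zero, one_smul, Nat.sub_zero] at h
    rw [← h]
    refine Finset.sum_congr rfl fun j hj => ?_
    have := Finset.mem_range.1 hj
    rw [smul_smul, ← pow_succ']
    congr 4
    · omega
    · omega
  exact LinearMap.congr_fun this p

theorem eps_delta (p : R[X] ⊗[R] G) : eps R G (delta R G p) = 0 := by
  have : (eps R G).restrictScalars R ∘ₗ (delta R G).restrictScalars R = 0 := by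
    apply ext_aux
    intro i g
    simp only [LinearMap.comp_apply, LinearMap.restrictScalars_apply, delta_tmul, map_sub, eps,
      LinearMap.liftBaseChange_tmul, LinearMap.id_apply, LinearMap.zero_apply]
    rw [smul_smul, ← pow_succ, sub_self]
  exact LinearMap.congr_fun this p

theorem pd_poly (n : ℕ) (h : HasProjectiveDimensionLT (ModuleCat.of R G) (n + 1)) :
    HasProjectiveDimensionLT (ModuleCat.of R[X] G) (n + 2) := by
  have h1 := pd_baseChange (A := R[X]) n G h
  have hex : Function.Exact (delta R G) (eps R G) := by
    intro p
    constructor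
    · intro hp
      refine ⟨hh R G p, ?_⟩
      rw [delta_hh, hp, TensorProduct.tmul_zero, sub_zero]
    · rintro ⟨q, rfl⟩
      exact eps_delta R G q
  let T := ModuleCat.shortComplexOfCompEqZero _ _ hex.linearMap_comp_eq_zero
  have hT : T.ShortExact := ModuleCat.shortComplex_shortExact T hex
    (Function.LeftInverse.injective (hh_delta R G))
    (fun g => ⟨1 ⊗ₜ g, by simp [T, eps]⟩)
  have h2 : HasProjectiveDimensionLT T.X₂ (n + 1) := h1
  exact hT.hasProjectiveDimensionLT_X₃ (n + 1) h1
    (hasProjectiveDimensionLT_of_ge T.X₂ (n + 1) (n + 1 + 1) (Nat.le_succ _))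

end poly
end CotAux

theorem polynomial_flat_cotorsionDim_le_succ (R : Type u) [CommRing R] (n : ℕ)
    (hcd : ∀ (F : Type u) [AddCommGroup F] [Module R F], Module.Flat R F →
      cotorsionDimLE R F n) :
    ∀ (G : Type u) [AddCommGroup G] [Module (Polynomial R) G],
      Module.Flat (Polynomial R) G → cotorsionDimLE (Polynomial R) G (n + 1) := by
  intro G _ _ hG
  refine CotAux.res_of_V _ G ?_
  intro F _ _ hF
  letI : Module R F := Module.compHom F (algebraMap R (Polynomial R))
  haveI : IsScalarTower R (Polynomial R) F := IsScalarTower.of_algebraMap_smul fun _ _ => rfl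
  have hFR : Module.Flat R F := Module.Flat.trans R (Polynomial R) F
  have h1 := CotAux.pd_of_V n F hFR fun N _ _ hN => CotAux.V_of_res n N (hcd N hN) F hFR
  have h2 := CotAux.pd_poly R F n h1
  exact HasProjectiveDimensionLT.subsingleton _ (n + 2) _ le_rfl _
end

section
/- Let R be a commutative ring and E^• a complex of pure injective R-modules that is pure acyclic (acyclic with all syzygies such that each short exact sequence of cycles is pure). Then E^• is contractible. -/
open CategoryTheory

universe u

section Aux

variable {R : Type u} [CommRing R]
    {E : ℤ → Type u} [∀ i, AddCommGroup (E i)] [∀ i, Module R (E i)]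

/-- The complex `Hom(A, E)` is acyclic. -/
def HomAcyclic (d : ∀ i : ℤ, E i →ₗ[R] E (i + 1))
    (A : Type u) [AddCommGroup A] [Module R A] : Prop :=
  ∀ (i : ℤ) (f : A →ₗ[R] E (i + 1)), (∀ x, d (i + 1) (f x) = 0) →
    ∃ g : A →ₗ[R] E i, ∀ x, d i (g x) = f x

variable {d : ∀ i : ℤ, E i →ₗ[R] E (i + 1)}

lemma dd_zero (hacyc : ∀ i, LinearMap.ker (d (i + 1)) = LinearMap.range (d i)) (i : ℤ) (x : E i) :
    d (i + 1) (d i x) = 0 := by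
  have : d i x ∈ LinearMap.ker (d (i + 1)) := by
    rw [hacyc]; exact ⟨x, rfl⟩
  simpa using this

/-- retracts -/
lemma HomAcyclic.retract {A B : Type u} [AddCommGroup A] [Module R A] [AddCommGroup B] [Module R B]
    (hA : HomAcyclic d A) (j : B →ₗ[R] A) (p : A →ₗ[R] B) (h : ∀ x, p (j x) = x) :
    HomAcyclic d B := by
  intro i f hf
  obtain ⟨g, hg⟩ := hA i (f.comp p) (fun x => hf _)
  exact ⟨g.comp j, fun x => by simp [hg, h]⟩

/-- direct sums -/
lemma HomAcyclic.directSum {ι : Type u} [DecidableEq ι] (M : ι → Type u)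
    [∀ i, AddCommGroup (M i)] [∀ i, Module R (M i)] (h : ∀ i, HomAcyclic d (M i)) :
    HomAcyclic d (DirectSum ι M) := by
  intro i f hf
  choose g hg using fun a => h a i (f.comp (DirectSum.lof R ι M a)) (fun x => hf _)
  refine ⟨DirectSum.toModule R ι _ g, fun x => ?_⟩
  have : (d i).comp (DirectSum.toModule R ι _ g) = f := by
    apply DirectSum.linearMap_ext
    intro a
    ext x
    simp [DirectSum.toModule_lof, hg]
  exact LinearMap.congr_fun this x

/-- cokernels of pure monomorphisms -/
lemma HomAcyclic.coker (hacyc : ∀ i, LinearMap.ker (d (i + 1)) = LinearMap.range (d i))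
    (hpinj : ∀ i, IsPureInjective R (E i))
    {G C : Type u} [AddCommGroup G] [Module R G] [AddCommGroup C] [Module R C]
    (π : G →ₗ[R] C) (hπ : Function.Surjective π)
    (hK : IsPureMono R (LinearMap.ker π).subtype)
    (hG : HomAcyclic d G) (hKA : HomAcyclic d (LinearMap.ker π)) : HomAcyclic d C := by
  intro i f hf
  obtain ⟨j, rfl⟩ : ∃ j, i = j + 1 := ⟨i - 1, by ring⟩
  obtain ⟨g, hg⟩ := hG _ (f.comp π) (fun x => hf _)
  obtain ⟨h, hh⟩ := hKA j (g.comp (LinearMap.ker π).subtype) (fun x => by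
    simp [hg, LinearMap.mem_ker.1 x.2])
  obtain ⟨h', hh'⟩ := hpinj j _ hK h
  let g' : G →ₗ[R] E (j + 1) := g - (d j).comp h'
  have hg' : LinearMap.ker π ≤ LinearMap.ker g' := by
    intro x hx
    have h1 := hh ⟨x, hx⟩
    have h2 := LinearMap.congr_fun hh' ⟨x, hx⟩
    simp only [LinearMap.comp_apply, Submodule.subtype_apply] at h1 h2
    simp [g', h2, h1]
  refine ⟨((LinearMap.ker π).liftQ g' hg').comp
    (π.quotKerEquivOfSurjective hπ).symm.toLinearMap, fun c => ?_⟩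
  obtain ⟨x, rfl⟩ := hπ c
  have : (π.quotKerEquivOfSurjective hπ).symm (π x) = Submodule.Quotient.mk x := by
    rw [LinearEquiv.symm_apply_eq]; rfl
  simp only [LinearMap.comp_apply, LinearEquiv.coe_coe, this]
  change d (j + 1) (g' x) = _
  simp [g', hg, dd_zero hacyc]

lemma isPureMono_of_retract {A : Type u} [AddCommGroup A] [Module R A] (B : Submodule R A)
    (ρ : A →ₗ[R] B) (h : ∀ x : B, ρ x = x) : IsPureMono R B.subtype := by
  refine ⟨B.injective_subtype, fun P _ _ => ?_⟩
  apply Function.LeftInverse.injective (g := LinearMap.rTensor P ρ)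
  intro x
  have : ρ.comp B.subtype = LinearMap.id := by ext x; simp [h]
  rw [← LinearMap.comp_apply, ← LinearMap.rTensor_comp, this]
  simp

/-- directed unions of pure submodules are pure -/
lemma isPureMono_iSup {A : Type u} [AddCommGroup A] [Module R A] {ι : Type u} [LinearOrder ι]
    (B : ι → Submodule R A) (hB : Monotone B) (hp : ∀ a, IsPureMono R (B a).subtype)
    (I : Set ι) : IsPureMono R (⨆ a ∈ I, B a).subtype := by
  refine ⟨Submodule.injective_subtype _, fun P _ _ => ?_⟩
  rw [injective_iff_map_eq_zero]
  intro x hx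
  rcases I.eq_empty_or_nonempty with rfl | hI
  · have hs : ∀ y : (⨆ a ∈ (∅ : Set ι), B a : Submodule R A), y = 0 := by
      rintro ⟨y, hy⟩
      simpa using hy
    induction x using TensorProduct.induction_on with
    | zero => rfl
    | tmul y p => rw [hs y, TensorProduct.zero_tmul]
    | add y z hy hz =>
      have : ∀ w : TensorProduct R (⨆ a ∈ (∅ : Set ι), B a : Submodule R A) P, w = 0 := by
        intro w
        induction w using TensorProduct.induction_on with
        | zero => rfl
        | tmul y p => rw [hs y, TensorProduct.zero_tmul]
        | add y z hy hz => rw [hy, hz, add_zero]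
      exact this _
  · have hle : ∀ a ∈ I, B a ≤ ⨆ a ∈ I, B a := fun a ha => le_iSup₂_of_le a ha le_rfl
    have key : ∀ x : TensorProduct R (⨆ a ∈ I, B a : Submodule R A) P,
        ∃ a, ∃ ha : a ∈ I, ∃ y : TensorProduct R (B a) P,
          LinearMap.rTensor P (Submodule.inclusion (hle a ha)) y = x := by
      intro x
      induction x using TensorProduct.induction_on with
      | zero =>
        obtain ⟨a, ha⟩ := hI
        exact ⟨a, ha, 0, by simp⟩
      | tmul y p =>
        obtain ⟨y, hy⟩ := y
        have hy' := hy
        have : Nonempty I := hI.to_subtype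
        rw [iSup_subtype', Submodule.mem_iSup_of_directed] at hy'
        · obtain ⟨a, ha⟩ := hy'
          exact ⟨a, a.2, TensorProduct.tmul R ⟨y, ha⟩ p, rfl⟩
        · exact Monotone.directed_le (fun a b hab => hB hab)
      | add y z hy hz =>
        obtain ⟨a, ha, y, rfl⟩ := hy
        obtain ⟨b, hb, z, rfl⟩ := hz
        have hm : max a b ∈ I := by
          rcases max_choice a b with h | h <;> rw [h] <;> assumption
        refine ⟨max a b, hm,
          LinearMap.rTensor P (Submodule.inclusion (hB (le_max_left a b))) y +
          LinearMap.rTensor P (Submodule.inclusion (hB (le_max_right a b))) z, ?_⟩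
        rw [map_add, ← LinearMap.comp_apply, ← LinearMap.rTensor_comp, ← LinearMap.comp_apply,
          ← LinearMap.rTensor_comp]
        rfl
    obtain ⟨a, ha, y, rfl⟩ := key x
    rw [← LinearMap.comp_apply, ← LinearMap.rTensor_comp, Submodule.subtype_comp_inclusion] at hx
    have : y = 0 := (hp a).2 P (by rw [hx, map_zero])
    rw [this, map_zero]

/-- extension step -/
lemma extension_step (hacyc : ∀ i, LinearMap.ker (d (i + 1)) = LinearMap.range (d i))
    (hpinj : ∀ i, IsPureInjective R (E i))
    {A : Type u} [AddCommGroup A] [Module R A] (U V : Submodule R A) (hUV : U ≤ V)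
    (hpU : IsPureMono R U.subtype) (hU : HomAcyclic d U) (hV : HomAcyclic d V) (i : ℤ)
    (f : A →ₗ[R] E (i + 1)) (hf : ∀ x ∈ V, d (i + 1) (f x) = 0)
    (g : U →ₗ[R] E i) (hg : ∀ x, d i (g x) = f x) :
    ∃ g' : V →ₗ[R] E i, (∀ x, d i (g' x) = f x) ∧ ∀ x : U, g' ⟨x, hUV x.2⟩ = g x := by
  obtain ⟨j, rfl⟩ : ∃ j, i = j + 1 := ⟨i - 1, by ring⟩
  obtain ⟨k, hk⟩ := hV _ (f.comp V.subtype) (fun x => hf x x.2)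
  obtain ⟨h, hh⟩ := hU j (k.comp (Submodule.inclusion hUV) - g) (fun x => by
    simp [hk, hg])
  obtain ⟨h', hh'⟩ := hpinj j _ hpU h
  refine ⟨k - (d j).comp (h'.comp V.subtype), fun x => ?_, fun x => ?_⟩
  · simp [hk, dd_zero hacyc]
  · have h1 := hh x
    have h2 := LinearMap.congr_fun hh' x
    simp only [LinearMap.comp_apply, Submodule.subtype_apply, LinearMap.sub_apply] at h1 h2 ⊢
    rw [h2, h1]
    exact sub_sub_cancel _ _

lemma homAcyclic_lowerSet (hacyc : ∀ i, LinearMap.ker (d (i + 1)) = LinearMap.range (d i))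
    (hpinj : ∀ i, IsPureInjective R (E i))
    {A : Type u} [AddCommGroup A] [Module R A] {ι : Type u} [LinearOrder ι] [WellFoundedLT ι]
    (B : ι → Submodule R A) (hB : Monotone B) (hp : ∀ a, IsPureMono R (B a).subtype)
    (hBA : ∀ a, HomAcyclic d (B a)) (J : Set ι) (hJ : IsLowerSet J)
    (hU : ∀ c ∈ J, HomAcyclic d (⨆ a ∈ Set.Iio c, B a : Submodule R A)) :
    HomAcyclic d (⨆ a ∈ J, B a : Submodule R A) := by
  intro i f₀ hf₀
  obtain ⟨f, hf⟩ := hpinj (i + 1) _ (isPureMono_iSup B hB hp J) f₀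
  have hff : ∀ (x : A) (hx : x ∈ (⨆ a ∈ J, B a : Submodule R A)), f x = f₀ ⟨x, hx⟩ :=
    fun x hx => LinearMap.congr_fun hf ⟨x, hx⟩
  let S : Set (A →ₗ.[R] E i) := {g | (∃ I : Set ι, IsLowerSet I ∧ I ⊆ J ∧
    g.domain = ⨆ a ∈ I, B a) ∧ ∀ x : g.domain, d i (g x) = f x}
  obtain ⟨m, -, hm⟩ := zorn_le_nonempty₀ S (by
    intro c hc hch y hy
    have hdir : DirectedOn (· ≤ ·) c := hch.directedOn
    refine ⟨LinearPMap.sSup c hdir, ⟨?_, ?_⟩, fun z hz => LinearPMap.le_sSup hdir hz⟩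
    · have h1 : ∀ g ∈ c, ∃ I : Set ι, IsLowerSet I ∧ I ⊆ J ∧ g.domain = ⨆ a ∈ I, B a :=
        fun g hg => (hc hg).1
      refine ⟨{a | ∃ I : Set ι, a ∈ I ∧ IsLowerSet I ∧ I ⊆ J ∧ 
        ∃ g ∈ c, g.domain = ⨆ a ∈ I, B a}, ?_, ?_, ?_⟩
      · rintro a b hab ⟨I, haI, hI, h⟩
        exact ⟨I, hI hab haI, hI, h⟩
      · rintro a ⟨I, haI, hI, hIJ, h⟩
        exact hIJ haI
      · rw [LinearPMap.domain_sSup]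
        apply le_antisymm
        · apply sSup_le
          rintro _ ⟨g, hg, rfl⟩
          obtain ⟨I, hI, hIJ, h⟩ := h1 g hg
          rw [h]
          exact iSup₂_le fun a ha => le_iSup₂_of_le a ⟨I, ha, hI, hIJ, g, hg, h⟩ le_rfl
        · refine iSup₂_le ?_
          rintro a ⟨I, ha, hI, hIJ, g, hg, h⟩
          refine le_trans ?_ (le_sSup ⟨g, hg, rfl⟩)
          rw [h]
          exact le_iSup₂_of_le a ha le_rfl
    · rintro ⟨x, hx⟩
      obtain ⟨g, hg, hxg⟩ := (LinearPMap.mem_domain_sSup_iff ⟨y, hy⟩ hdir).1 hx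
      have := (LinearPMap.le_sSup hdir hg).2 (x := ⟨x, hxg⟩) (y := ⟨x, hx⟩) rfl
      rw [← this]
      exact (hc hg).2 ⟨x, hxg⟩) ⊥ (by
    refine ⟨⟨∅, isLowerSet_empty, Set.empty_subset _, by simp; rfl⟩, ?_⟩
    rintro ⟨x, hx⟩
    have hx0 : x = 0 := (Submodule.mem_bot R).1 hx
    subst hx0
    have : (⟨0, hx⟩ : (⊥ : A →ₗ.[R] E i).domain) = 0 := rfl
    rw [this, LinearPMap.map_zero]
    simp)
  obtain ⟨⟨⟨I, hI, hIJ, hmI⟩, hmf⟩, hmax⟩ := hm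
  have hall : ∀ c ∈ J, B c ≤ m.domain := by
    intro c
    induction c using WellFoundedLT.induction with
    | ind c ih =>
    intro hc
    by_cases hcI : c ∈ I
    · rw [hmI]; exact le_iSup₂_of_le c hcI le_rfl
    have hdom : m.domain = ⨆ a ∈ Set.Iio c, B a := by
      apply le_antisymm
      · rw [hmI]
        refine iSup₂_le fun a ha => le_iSup₂_of_le a ?_ le_rfl
        by_contra hac
        exact hcI (hI (not_lt.1 hac) ha)
      · exact iSup₂_le fun a ha => ih a ha (hJ (le_of_lt ha) hc)
    have hle : m.domain ≤ B c := by
      rw [hdom]; exact iSup₂_le fun a ha => hB (le_of_lt ha)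
    obtain ⟨g', hg', hgg⟩ := extension_step hacyc hpinj m.domain (B c) hle
      (by rw [hdom]; exact isPureMono_iSup B hB hp _) (by rw [hdom]; exact hU c hc) (hBA c) i f
      (fun x hx => by
        rw [hff x ((le_iSup₂_of_le c hc le_rfl : B c ≤ ⨆ a ∈ J, B a) hx)]
        exact hf₀ _)
      m.toFun hmf
    have hS : (⟨B c, g'⟩ : A →ₗ.[R] E i) ∈ S := by
      refine ⟨⟨Set.Iic c, isLowerSet_Iic c, fun a ha => hJ ha hc, ?_⟩, hg'⟩
      apply le_antisymm
      · exact le_iSup₂_of_le c (Set.mem_Iic.2 le_rfl) le_rfl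
      · exact iSup₂_le fun a ha => hB ha
    have hmle : m ≤ (⟨B c, g'⟩ : A →ₗ.[R] E i) := by
      refine ⟨hle, ?_⟩
      rintro ⟨x, hx⟩ ⟨y, hy⟩ hxy
      have hxy' : x = y := hxy
      subst hxy'
      exact (hgg ⟨x, hx⟩).symm
    exact (hmax hS hmle).1
  have htop : (⨆ a ∈ J, B a : Submodule R A) ≤ m.domain := iSup₂_le hall
  refine ⟨m.toFun.comp (Submodule.inclusion htop), fun x => ?_⟩
  have := hmf (Submodule.inclusion htop x)
  exact this.trans (hff _ x.2)

lemma homAcyclic_iSup (hacyc : ∀ i, LinearMap.ker (d (i + 1)) = LinearMap.range (d i))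
    (hpinj : ∀ i, IsPureInjective R (E i))
    {A : Type u} [AddCommGroup A] [Module R A] {ι : Type u} [LinearOrder ι] [WellFoundedLT ι]
    (B : ι → Submodule R A) (hB : Monotone B) (hp : ∀ a, IsPureMono R (B a).subtype)
    (hBA : ∀ a, HomAcyclic d (B a)) :
    HomAcyclic d (⨆ a ∈ (Set.univ : Set ι), B a : Submodule R A) := by
  apply homAcyclic_lowerSet hacyc hpinj B hB hp hBA _ isLowerSet_univ
  intro c _
  induction c using WellFoundedLT.induction with
  | ind c ih =>
  exact homAcyclic_lowerSet hacyc hpinj B hB hp hBA _ (isLowerSet_Iio c)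
    (fun y hy => ih y hy (Set.mem_univ y))

/-- colimits of chains of quotients -/
lemma homAcyclic_chain (hacyc : ∀ i, LinearMap.ker (d (i + 1)) = LinearMap.range (d i))
    (hpinj : ∀ i, IsPureInjective R (E i))
    {F : Type u} [AddCommGroup F] [Module R F] {ι : Type u} [LinearOrder ι] [WellFoundedLT ι]
    [NoMaxOrder ι] [Nonempty ι]
    (N : ι → Submodule R F) (hN : Monotone N) (hA : ∀ a, HomAcyclic d (F ⧸ N a)) :
    HomAcyclic d (F ⧸ ⨆ a, N a) := by
  let of : ∀ a, (F ⧸ N a) →ₗ[R] (DirectSum ι (fun a => F ⧸ N a)) := DirectSum.lof R ι (fun a => F ⧸ N a)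
  have hle : ∀ a, N a ≤ (⨆ a, N a).comap LinearMap.id := fun a => le_iSup N a
  let π : (DirectSum ι (fun a => F ⧸ N a)) →ₗ[R] (F ⧸ ⨆ a, N a) :=
    DirectSum.toModule R ι _ (fun a => (N a).mapQ (⨆ a, N a) LinearMap.id (hle a))
  have π_of : ∀ a y, π (of a (Submodule.Quotient.mk y)) = Submodule.Quotient.mk y := by
    intro a y
    exact DirectSum.toModule_lof R a _
  let ρ : ι → (DirectSum ι (fun a => F ⧸ N a)) →ₗ[R] (DirectSum ι (fun a => F ⧸ N a)) := fun b => DirectSum.toModule R ι _ (fun a =>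
    if h : a < b then of a - (of b).comp ((N a).mapQ (N b) LinearMap.id (hN h.le)) else 0)
  have ρ_lt : ∀ a b y, a < b → ρ b (of a (Submodule.Quotient.mk y)) =
      of a (Submodule.Quotient.mk y) - of b (Submodule.Quotient.mk y) := by
    intro a b y h
    refine (DirectSum.toModule_lof R a _).trans ?_
    rw [dif_pos h]
    rfl
  have ρ_ge : ∀ a b y, ¬ a < b → ρ b (of a (Submodule.Quotient.mk y)) = 0 := by
    intro a b y h
    refine (DirectSum.toModule_lof R a _).trans ?_
    rw [dif_neg h]
    rfl
  have ext' : ∀ {M : Type u} [AddCommGroup M] [Module R M] (p q : (DirectSum ι (fun a => F ⧸ N a)) →ₗ[R] M),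
      (∀ a y, p (of a (Submodule.Quotient.mk y)) = q (of a (Submodule.Quotient.mk y))) →
      ∀ x, p x = q x := by
    intro M _ _ p q h x
    have : p = q := by
      apply DirectSum.linearMap_ext
      intro a
      apply LinearMap.ext
      intro z
      obtain ⟨y, rfl⟩ := Submodule.Quotient.mk_surjective _ z
      exact h a y
    rw [this]
  have ρρ : ∀ b c, b ≤ c → ∀ x, ρ c (ρ b x) = ρ b x := by
    intro b c hbc
    apply ext' ((ρ c).comp (ρ b)) (ρ b)
    intro a y
    simp only [LinearMap.comp_apply]
    by_cases h : a < b
    · rw [ρ_lt a b y h, map_sub, ρ_lt a c y (h.trans_le hbc)]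
      rcases hbc.eq_or_lt with rfl | hbc
      · rw [ρ_ge b b y (lt_irrefl _), sub_zero]
      · rw [ρ_lt b c y hbc]; abel
    · rw [ρ_ge a b y h, map_zero]
  let B : ι → Submodule R (DirectSum ι (fun a => F ⧸ N a)) := fun b => LinearMap.range (ρ b)
  have hB : Monotone B := by
    rintro b c hbc _ ⟨x, rfl⟩
    exact ⟨ρ b x, ρρ b c hbc x⟩
  have hret : ∀ b (x : B b), (ρ b).rangeRestrict x = x := by
    rintro b ⟨_, x, rfl⟩
    apply Subtype.ext
    exact ρρ b b le_rfl x
  have hp : ∀ b, IsPureMono R (A := B b) (B := DirectSum ι (fun a => F ⧸ N a))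
      (B b).subtype := by
    intro b
    exact isPureMono_of_retract (B b) _ (hret b)
  have hG : HomAcyclic d (DirectSum ι (fun a => F ⧸ N a)) := HomAcyclic.directSum _ hA
  have hBA : ∀ b, HomAcyclic d (B b) := fun b => hG.retract (B b).subtype _ (hret b)
  have hsup := homAcyclic_iSup hacyc hpinj B hB hp hBA
  have hpsup := isPureMono_iSup B hB hp Set.univ
  have hπ : Function.Surjective π := by
    intro z
    obtain ⟨y, rfl⟩ := Submodule.Quotient.mk_surjective _ z
    obtain ⟨a⟩ := ‹Nonempty ι›
    exact ⟨_, π_of a y⟩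
  have hev : ∀ x : (DirectSum ι (fun a => F ⧸ N a)), ∃ (b : ι) (y : F), π x = Submodule.Quotient.mk y ∧
      ∀ c, b < c → ρ c x = x - of c (Submodule.Quotient.mk y) := by
    intro x
    induction x using DirectSum.induction_on with
    | zero =>
      obtain ⟨a⟩ := ‹Nonempty ι›
      exact ⟨a, 0, by simp, fun c _ => by simp⟩
    | of a z =>
      obtain ⟨y, rfl⟩ := Submodule.Quotient.mk_surjective _ z
      exact ⟨a, y, π_of a y, fun c hc => ρ_lt a c y hc⟩
    | add x x' hx hx' =>
      obtain ⟨b, y, h1, h2⟩ := hx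
      obtain ⟨b', y', h1', h2'⟩ := hx'
      refine ⟨max b b', y + y', by rw [map_add, h1, h1']; rfl, fun c hc => ?_⟩
      rw [map_add, h2 c ((le_max_left _ _).trans_lt hc), h2' c ((le_max_right _ _).trans_lt hc),
        Submodule.Quotient.mk_add, map_add]
      abel
  have hker : LinearMap.ker π = ⨆ a ∈ (Set.univ : Set ι), B a := by
    apply le_antisymm
    · intro x hx
      obtain ⟨b, y, h1, h2⟩ := hev x
      rw [LinearMap.mem_ker.1 hx, eq_comm, Submodule.Quotient.mk_eq_zero,
        Submodule.mem_iSup_of_directed _ hN.directed_le] at h1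
      obtain ⟨a, ha⟩ := h1
      obtain ⟨c, hc⟩ := exists_gt (max a b)
      have h3 := h2 c ((le_max_right _ _).trans_lt hc)
      rw [(Submodule.Quotient.mk_eq_zero (N c)).2
        (hN ((le_max_left _ _).trans hc.le) ha), map_zero, sub_zero] at h3
      exact (le_iSup₂_of_le c (Set.mem_univ c) le_rfl : B c ≤ ⨆ a ∈ (Set.univ : Set ι), B a)
        ⟨x, h3⟩
    · refine iSup₂_le fun b _ => ?_
      rintro _ ⟨x, rfl⟩
      rw [LinearMap.mem_ker]
      refine ext' (π.comp (ρ b)) 0 (fun a y => ?_) x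
      simp only [LinearMap.comp_apply]
      by_cases h : a < b
      · rw [ρ_lt a b y h, map_sub, π_of, π_of]; simp
      · rw [ρ_ge a b y h]; simp
  rw [← hker] at hsup hpsup
  exact HomAcyclic.coker hacyc hpinj π hπ hpsup hG hsup

lemma linearCombination_symm {X : Type u} (p q : X →₀ R) :
    Finsupp.linearCombination R (⇑p) q = Finsupp.linearCombination R (⇑q) p := by
  classical
  rw [Finsupp.linearCombination_apply, Finsupp.linearCombination_apply,
    Finsupp.sum_of_support_subset (s := p.support ∪ q.support) _ Finset.subset_union_right _
      (by simp),
    Finsupp.sum_of_support_subset (s := p.support ∪ q.support) _ Finset.subset_union_left _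
      (by simp)]
  exact Finset.sum_congr rfl fun x _ => by simp [mul_comm]

/-- solving finite systems of equations in pure submodules -/
lemma pure_solve {X : Type u} {M : Type u} [AddCommGroup M] [Module R M] (Z : Submodule R M)
    (hZ : IsPureMono R Z.subtype) {n : ℕ} (t : Fin n → (X →₀ R)) (f : (X →₀ R) →ₗ[R] M)
    (hf : ∀ j, f (t j) ∈ Z) : ∃ u : (X →₀ R) →ₗ[R] Z, ∀ j, (u (t j) : M) = f (t j) := by
  classical
  let φ : (X →₀ R) →ₗ[R] (Fin n → R) :=
    LinearMap.pi (fun j => Finsupp.linearCombination R (⇑(t j)))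
  let P := (Fin n → R) ⧸ LinearMap.range φ
  let q : (Fin n → R) →ₗ[R] P := (LinearMap.range φ).mkQ
  let z : TensorProduct R Z (Fin n → R) :=
    ∑ j, TensorProduct.tmul R (⟨f (t j), hf j⟩ : Z) (Pi.single j 1)
  have hex : Function.Exact φ q := LinearMap.exact_map_mkQ_range φ
  have hq : Function.Surjective q := Submodule.mkQ_surjective _
  have hz : LinearMap.lTensor Z q z = 0 := by
    apply hZ.2 P
    rw [map_zero]
    simp only [z, map_sum, LinearMap.lTensor_tmul, LinearMap.rTensor_tmul, Submodule.subtype_apply]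
    have hgen : ∀ g : (X →₀ R) →ₗ[R] M, ∀ s : Fin n → (X →₀ R), ∀ j, 
        TensorProduct.tmul R (g (s j)) (q (Pi.single j 1)) =
        LinearMap.lTensor M (q.comp ((LinearMap.single R (fun _ => R) j)))
          (TensorProduct.tmul R (g (s j)) (1 : R)) := by
      intro g s j
      simp
    have hexp : ∀ j, TensorProduct.tmul R (f (t j)) (q (Pi.single j 1)) =
        ∑ x ∈ Finset.univ.biUnion (fun j => (t j).support),
          TensorProduct.tmul R (f (Finsupp.single x 1)) (q (Pi.single j (t j x))) := by
      intro j
      have h1 : t j = ∑ x ∈ Finset.univ.biUnion (fun j => (t j).support),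
          (t j x) • Finsupp.single x (1 : R) := by
        conv_lhs => rw [← Finsupp.sum_single (t j)]
        rw [Finsupp.sum_of_support_subset (s := Finset.univ.biUnion (fun j => (t j).support)) _
          (Finset.subset_biUnion_of_mem (fun j => (t j).support) (Finset.mem_univ j)) _ (by simp)]
        simp
      conv_lhs => rw [h1]
      rw [map_sum, TensorProduct.sum_tmul]
      refine Finset.sum_congr rfl fun x _ => ?_
      rw [map_smul, TensorProduct.smul_tmul, ← map_smul]
      congr 2
      rw [← Pi.single_smul]; simp
    rw [Finset.sum_congr rfl (fun j _ => hexp j), Finset.sum_comm]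
    refine Finset.sum_eq_zero fun x _ => ?_
    rw [← TensorProduct.tmul_sum, ← map_sum]
    have h2 : ∑ j, Pi.single j (t j x) = φ (Finsupp.single x 1) := by
      rw [Finset.univ_sum_single (fun j => t j x)]
      ext j
      simp [φ]
    rw [h2, hex.apply_apply_eq_zero, TensorProduct.tmul_zero]
  obtain ⟨w, hw⟩ := (lTensor_exact Z hex hq z).1 hz
  let v : Fin n → TensorProduct R Z (Fin n → R) →ₗ[R] Z := fun j =>
    (TensorProduct.rid R Z).toLinearMap.comp (LinearMap.lTensor Z (LinearMap.proj j))
  have hv : ∀ j, v j z = ⟨f (t j), hf j⟩ := by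
    intro j
    simp only [v, z, map_sum, LinearMap.comp_apply, LinearMap.lTensor_tmul, LinearEquiv.coe_coe,
      TensorProduct.rid_tmul, LinearMap.proj_apply]
    rw [Finset.sum_eq_single j]
    · simp
    · intro b _ hb
      simp [Pi.single_apply, hb.symm]
    · simp
  have hu : ∀ w, ∃ u : (X →₀ R) →ₗ[R] Z, ∀ j, u (t j) = v j (LinearMap.lTensor Z φ w) := by
    intro w
    induction w using TensorProduct.induction_on with
    | zero => exact ⟨0, by simp⟩
    | tmul y p =>
      refine ⟨(LinearMap.toSpanSingleton R Z y).comp (Finsupp.linearCombination R (⇑p)), ?_⟩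
      intro j
      simp only [v, LinearMap.comp_apply, LinearMap.lTensor_tmul, LinearEquiv.coe_coe,
        TensorProduct.rid_tmul, LinearMap.proj_apply, LinearMap.toSpanSingleton_apply]
      rw [linearCombination_symm]
      rfl
    | add a b ha hb =>
      obtain ⟨u, hu⟩ := ha
      obtain ⟨u', hu'⟩ := hb
      exact ⟨u + u', fun j => by simp [hu, hu']⟩
  obtain ⟨u, hu⟩ := hu w
  refine ⟨u, fun j => ?_⟩
  rw [hu, hw, hv]

/-- finitely many relations -/
lemma homAcyclic_finite (hacyc : ∀ i, LinearMap.ker (d (i + 1)) = LinearMap.range (d i))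
    (hpure : ∀ i, IsPureMono R (LinearMap.ker (d i)).subtype)
    {X : Type u} (T : Set (X →₀ R)) (hT : T.Finite) :
    HomAcyclic d ((X →₀ R) ⧸ Submodule.span R T) := by
  intro i f hf
  obtain ⟨n, t, ht⟩ : ∃ (n : ℕ) (t : Fin n → (X →₀ R)), Set.range t = T := by
    obtain ⟨n, t, -, ht⟩ := hT.fin_param
    exact ⟨n, t, ht⟩
  have hlift : ∀ y : E (i + 1), d (i + 1) y = 0 → ∃ x, d i x = y := by
    intro y hy
    have : y ∈ LinearMap.ker (d (i + 1)) := hy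
    rw [hacyc] at this
    exact this
  choose g hg using fun x : X => hlift (f (Submodule.Quotient.mk (Finsupp.single x 1))) (hf _)
  let F : (X →₀ R) →ₗ[R] E i := Finsupp.linearCombination R g
  have hF : ∀ p, d i (F p) = f (Submodule.Quotient.mk p) := by
    have : (d i).comp F = f.comp (Submodule.span R T).mkQ := by
      ext x
      simp [F, hg]
    exact fun p => LinearMap.congr_fun this p
  have htT : ∀ j, t j ∈ T := fun j => ht ▸ ⟨j, rfl⟩
  obtain ⟨u, hu⟩ := pure_solve (LinearMap.ker (d i)) (hpure i) t F (fun j => by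
    rw [LinearMap.mem_ker, hF, (Submodule.Quotient.mk_eq_zero _).2
      (Submodule.subset_span (htT j)), map_zero])
  refine ⟨(Submodule.span R T).liftQ (F - (LinearMap.ker (d i)).subtype.comp u) ?_, fun x => ?_⟩
  · rw [Submodule.span_le, ← ht]
    rintro _ ⟨j, rfl⟩
    simp [hu]
  · obtain ⟨p, rfl⟩ := Submodule.Quotient.mk_surjective _ x
    change d i (F p - u p) = _
    rw [map_sub, hF, LinearMap.mem_ker.1 (u p).2, sub_zero]

lemma homAcyclic_rel (hacyc : ∀ i, LinearMap.ker (d (i + 1)) = LinearMap.range (d i))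
    (hpure : ∀ i, IsPureMono R (LinearMap.ker (d i)).subtype)
    (hpinj : ∀ i, IsPureInjective R (E i)) {X : Type u} (κ : Cardinal.{u}) :
    ∀ (T : Set (X →₀ R)), Cardinal.mk T = κ →
      HomAcyclic d ((X →₀ R) ⧸ Submodule.span R T) := by
  induction κ using WellFoundedLT.induction with
  | ind κ ih =>
  intro T hT
  by_cases hfin : T.Finite
  · exact homAcyclic_finite hacyc hpure T hfin
  have hinf : Cardinal.aleph0 ≤ κ := by
    rw [← hT, Cardinal.aleph0_le_mk_iff]
    exact Set.infinite_coe_iff.2 hfin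
  have := Cardinal.noMaxOrder hinf
  obtain ⟨e⟩ : Nonempty (κ.ord.ToType ≃ T) := by
    rw [← Cardinal.eq, Cardinal.mk_ord_toType, hT]
  have : Nonempty κ.ord.ToType := by
    rw [← Cardinal.mk_ne_zero_iff, Cardinal.mk_ord_toType]
    exact (Cardinal.aleph0_pos.trans_le hinf).ne'
  let N : κ.ord.ToType → Submodule R (X →₀ R) := fun a =>
    Submodule.span R ((fun b => (e b : X →₀ R)) '' Set.Iio a)
  have hN : Monotone N := fun a b hab =>
    Submodule.span_mono (Set.image_mono (Set.Iio_subset_Iio hab))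
  have hsup : ⨆ a, N a = Submodule.span R T := by
    apply le_antisymm
    · refine iSup_le fun a => Submodule.span_mono ?_
      rintro _ ⟨b, -, rfl⟩
      exact (e b).2
    · rw [Submodule.span_le]
      intro y hy
      obtain ⟨b, hb⟩ := exists_gt (e.symm ⟨y, hy⟩)
      refine (le_iSup N b) (Submodule.subset_span ⟨_, hb, ?_⟩)
      simp
  rw [← hsup]
  refine homAcyclic_chain hacyc hpinj N hN fun a => ih _ ?_ _ rfl
  exact Cardinal.mk_image_le.trans_lt (Cardinal.mk_Iio_toType_ord_lt a)

lemma homAcyclic_all (hacyc : ∀ i, LinearMap.ker (d (i + 1)) = LinearMap.range (d i))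
    (hpure : ∀ i, IsPureMono R (LinearMap.ker (d i)).subtype)
    (hpinj : ∀ i, IsPureInjective R (E i)) (A : Type u) [AddCommGroup A] [Module R A] :
    HomAcyclic d A := by
  let p : (A →₀ R) →ₗ[R] A := Finsupp.linearCombination R id
  have hp : Function.Surjective p := Finsupp.linearCombination_id_surjective R A
  have h := homAcyclic_rel hacyc hpure hpinj _ (LinearMap.ker p : Set (A →₀ R)) rfl
  rw [Submodule.span_eq] at h
  let e := p.quotKerEquivOfSurjective hp
  exact h.retract e.symm.toLinearMap e.toLinearMap (fun x => by simp)

end Aux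

/-- a pure acyclic complex of pure injective modules is contractible. -/
theorem pure_acyclic_complex_of_pureInjectives_contractible (R : Type u) [CommRing R]
    (E : ℤ → Type u) [∀ i, AddCommGroup (E i)] [∀ i, Module R (E i)]
    (d : ∀ i : ℤ, E i →ₗ[R] E (i + 1))
    (hacyc : ∀ i, LinearMap.ker (d (i + 1)) = LinearMap.range (d i))
    (hpure : ∀ i, IsPureMono R (LinearMap.ker (d i)).subtype)
    (hpinj : ∀ i, IsPureInjective R (E i)) :
    ∃ s : ∀ i : ℤ, E (i + 1) →ₗ[R] E i,
      ∀ i, (s (i + 1)).comp (d (i + 1)) + (d i).comp (s i) = LinearMap.id := by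
  have hex : ∀ i, ∃ σ : LinearMap.ker (d (i + 1)) →ₗ[R] E i, ∀ x, d i (σ x) = x := fun i =>
    homAcyclic_all hacyc hpure hpinj _ i (LinearMap.ker (d (i + 1))).subtype (fun x => x.2)
  choose σ hσ using hex
  let δ : ∀ i, E i →ₗ[R] LinearMap.ker (d (i + 1)) := fun i =>
    (d i).codRestrict _ (fun x => dd_zero hacyc i x)
  let τ : ∀ i, E (i + 1) →ₗ[R] LinearMap.ker (d (i + 1)) := fun i =>
    (LinearMap.id - (σ (i + 1)).comp (δ (i + 1))).codRestrict _ (fun x => by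
      simp only [LinearMap.mem_ker, LinearMap.sub_apply, LinearMap.id_apply, map_sub,
        LinearMap.comp_apply, hσ]
      exact sub_self _)
  refine ⟨fun i => (σ i).comp (τ i), fun i => ?_⟩
  ext x
  have h1 : τ (i + 1) (d (i + 1) x) = δ (i + 1) x := by
    apply Subtype.ext
    have : δ (i + 1 + 1) (d (i + 1) x) = 0 := Subtype.ext (dd_zero hacyc _ x)
    simp only [τ, LinearMap.codRestrict_apply, LinearMap.sub_apply, LinearMap.comp_apply, this]
    rw [map_zero, sub_zero]
    rfl
  simp only [LinearMap.add_apply, LinearMap.comp_apply, h1, hσ, LinearMap.id_apply]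
  simp [τ]
end
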